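/- arXiv:1104.2547 — 7 statements merged into one kernel-verified Lean document; each statement's English description precedes it below -/
import Mathlib

section
/- Let n ≥ 2 and let F₀,…,F_{2n−1} be a bipyramidal perfect one-factorization (bipyramidal P1F) of G_{2n+2} such that the edge {0,∞₁} belongs to F₀, and let r ∈ Z_{2n} be the vertex matched with ∞₂ in F₀. Set C₀ = F₀ \ {{0,∞₁},{r,∞₂}} (so C₀ is a set of n−1 unordered pairs of elements of Z_{2n}). Then C₀ is a set of n−1 pairwise disjoint unordered pairs of nonzero elements of Z_{2n} and C₀ defines a C-code of length 2n: setting C_i = {{x+i, y+i} : {x,y} ∈ C₀} for i ∈ Z_{2n}, for all m ≠ k in Z_{2n} one has C_m ∩ C_k = ∅, the simple graph on vertex set Z_{2n} with edge set C_m ∪ C_k contains no cycle, and the vertices m and k lie in different connected components of that graph. -/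
/-! Common definitions: C-codes, even starters, even 2-starters,
and bipyramidal (perfect) one-factorizations of the graph `G_{2n+2}`. -/

/-- Translate each unordered pair in `C` by `i`. -/
def shiftSet {m : ℕ} (i : ZMod m) (C : Set (Sym2 (ZMod m))) : Set (Sym2 (ZMod m)) :=
  (Sym2.map (· + i)) '' C

/-- `C` consists of `k` pairwise disjoint unordered pairs (2-element sets) of nonzero
elements of `ZMod m`. -/
def IsPairing (m k : ℕ) (C : Set (Sym2 (ZMod m))) : Prop :=
  C.ncard = k ∧ (∀ e ∈ C, ¬ e.IsDiag) ∧ (∀ e ∈ C, (0 : ZMod m) ∉ e) ∧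
    (∀ e ∈ C, ∀ e' ∈ C, e ≠ e' → ∀ a, a ∈ e → a ∉ e')

/-- The defining condition of a C-code with columns `C_i = i + C0`:
for all `a ≠ b`, the columns `C_a` and `C_b` are disjoint, the graph on `ZMod m`
with edge set `C_a ∪ C_b` has no cycle, and `a`, `b` are in different components. -/
def CCodeCond (m : ℕ) (C0 : Set (Sym2 (ZMod m))) : Prop :=
  ∀ a b : ZMod m, a ≠ b →
    shiftSet a C0 ∩ shiftSet b C0 = ∅ ∧
    (SimpleGraph.fromEdgeSet (shiftSet a C0 ∪ shiftSet b C0)).IsAcyclic ∧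
    ¬ (SimpleGraph.fromEdgeSet (shiftSet a C0 ∪ shiftSet b C0)).Reachable a b

/-- `C0` defines a C-code of length `2n`. -/
def IsCCode (n : ℕ) (C0 : Set (Sym2 (ZMod (2*n)))) : Prop :=
  IsPairing (2*n) (n-1) C0 ∧ CCodeCond (2*n) C0

/-- An even starter in `ZMod (2n)`. -/
def IsEvenStarter (n : ℕ) (S : Set (Sym2 (ZMod (2*n)))) : Prop :=
  IsPairing (2*n) (n-1) S ∧
  ∀ i : ZMod (2*n), i ≠ 0 → i ≠ (n : ZMod (2*n)) →
    ∃ x y : ZMod (2*n), s(x, y) ∈ S ∧ (i = x - y ∨ i = y - x)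

/-- An even starter in `ZMod m` for even `m`, phrased with `n = m / 2`. -/
def IsEvenStarterMod (m : ℕ) (S : Set (Sym2 (ZMod m))) : Prop :=
  IsPairing m (m / 2 - 1) S ∧
  ∀ i : ZMod m, i ≠ 0 → i ≠ ((m / 2 : ℕ) : ZMod m) →
    ∃ x y : ZMod m, s(x, y) ∈ S ∧ (i = x - y ∨ i = y - x)

/-- Vertices of `G_{2n+2}`: `Sum.inl i` for `i ∈ ZMod (2n)`, and `Sum.inr false = ∞₁`,
`Sum.inr true = ∞₂`. -/
abbrev Vtx (n : ℕ) : Type := ZMod (2*n) ⊕ Bool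

/-- The graph `G_{2n+2}`: all pairs of distinct vertices are adjacent except
`{∞₁, ∞₂}` and the pairs `{i, i+n}` for `i ∈ ZMod (2n)`. -/
def Ggraph (n : ℕ) : SimpleGraph (Vtx n) :=
  SimpleGraph.fromRel fun u v =>
    match u, v with
    | Sum.inl i, Sum.inl j => j ≠ i + (n : ZMod (2*n))
    | Sum.inl _, Sum.inr _ => True
    | Sum.inr _, Sum.inl _ => True
    | Sum.inr _, Sum.inr _ => False

/-- The permutation `σ^i` (rotation by `i` on `ZMod (2n)`, fixing `∞₁` and `∞₂`). -/
def vshift (n : ℕ) (i : ZMod (2*n)) : Vtx n → Vtx n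
  | Sum.inl x => Sum.inl (x + i)
  | Sum.inr b => Sum.inr b

/-- The involution swapping `∞₁` and `∞₂` and fixing all elements of `ZMod (2n)`. -/
def iotaSwap (n : ℕ) : Vtx n → Vtx n
  | Sum.inl x => Sum.inl x
  | Sum.inr b => Sum.inr (!b)

/-- `F` is a perfect matching (one-factor) of `G_{2n+2}`. -/
def IsOneFactor (n : ℕ) (F : Set (Sym2 (Vtx n))) : Prop :=
  F ⊆ (Ggraph n).edgeSet ∧ ∀ v : Vtx n, ∃! e, e ∈ F ∧ v ∈ e

/-- A bipyramidal one-factorization of `G_{2n+2}`: `2n` pairwise edge-disjoint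
one-factors whose union is the whole edge set, with `F i = σ^i (F 0)`. -/
def IsBipyramidalOF (n : ℕ) (F : ZMod (2*n) → Set (Sym2 (Vtx n))) : Prop :=
  (∀ i, IsOneFactor n (F i)) ∧ (∀ i j, i ≠ j → F i ∩ F j = ∅) ∧
    (⋃ i, F i) = (Ggraph n).edgeSet ∧
    ∀ i, F i = (Sym2.map (vshift n i)) '' (F 0)

/-- The graph with edge set `E` is a Hamiltonian cycle: it is connected and every
vertex has degree 2. -/
def IsHamCycleOn {V : Type} (E : Set (Sym2 V)) : Prop :=
  (SimpleGraph.fromEdgeSet E).Connected ∧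
    ∀ v : V, ((SimpleGraph.fromEdgeSet E).neighborSet v).ncard = 2

/-- A bipyramidal perfect one-factorization of `G_{2n+2}`. -/
def IsBipyramidalP1F (n : ℕ) (F : ZMod (2*n) → Set (Sym2 (Vtx n))) : Prop :=
  IsBipyramidalOF n F ∧ ∀ j k, j ≠ k → IsHamCycleOn (F j ∪ F k)

/-- An even starter in the multiplicative group `(ZMod p)ˣ`. -/
def IsMulEvenStarter (p : ℕ) (S : Set (Sym2 ((ZMod p)ˣ))) : Prop :=
  S.ncard = (p - 3) / 2 ∧ (∀ e ∈ S, ¬ e.IsDiag) ∧ (∀ e ∈ S, (1 : (ZMod p)ˣ) ∉ e) ∧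
    (∀ e ∈ S, ∀ e' ∈ S, e ≠ e' → ∀ a, a ∈ e → a ∉ e') ∧
    ∀ u : (ZMod p)ˣ, u ≠ 1 → u ≠ -1 →
      ∃ x y : (ZMod p)ˣ, s(x, y) ∈ S ∧ (u = x⁻¹ * y ∨ u = x * y⁻¹)

/-- The number of pairs in `S` whose difference (in either order) is `d`. -/
noncomputable def diffCount (m : ℕ) (d : ℕ) (S : Set (Sym2 (ZMod m))) : ℕ :=
  {e ∈ S | ∃ x y : ZMod m, e = s(x, y) ∧
    (y - x = (d : ZMod m) ∨ x - y = (d : ZMod m))}.ncard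

/-- `(S0, S1)` is an even 2-starter in `ZMod (2n)`: each `Sᵢ` consists of `n-1`
unordered pairs of elements of `ZMod (2n) \ {i}`, and every `d` with `1 ≤ d ≤ n-1`
occurs exactly twice as a difference of a pair, counted over both sets. -/
def IsEven2Starter (n : ℕ) (S0 S1 : Set (Sym2 (ZMod (2*n)))) : Prop :=
  S0.ncard = n - 1 ∧ S1.ncard = n - 1 ∧
    (∀ e ∈ S0, ¬ e.IsDiag) ∧ (∀ e ∈ S1, ¬ e.IsDiag) ∧
    (∀ e ∈ S0, (0 : ZMod (2*n)) ∉ e) ∧ (∀ e ∈ S1, (1 : ZMod (2*n)) ∉ e) ∧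
    ∀ d : ℕ, 1 ≤ d → d ≤ n - 1 →
      diffCount (2*n) d S0 + diffCount (2*n) d S1 = 2

/-- The `i`-th column induced by `(S0, S1)`:
`C_i = {{x + 2⌊ī/2⌋, y + 2⌊ī/2⌋} : {x,y} ∈ S_{ī mod 2}}` where `ī = i.val`. -/
def qCol (n : ℕ) (S0 S1 : Set (Sym2 (ZMod (2*n)))) (i : ZMod (2*n)) :
    Set (Sym2 (ZMod (2*n))) :=
  (Sym2.map (· + ((2 * (i.val / 2) : ℕ) : ZMod (2*n)))) ''
    (if i.val % 2 = 0 then S0 else S1)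

/-- The quasi-C-code condition for the column family induced by `(S0, S1)`. -/
def QuasiCCodeCond (n : ℕ) (S0 S1 : Set (Sym2 (ZMod (2*n)))) : Prop :=
  ∀ a b : ZMod (2*n), a ≠ b →
    qCol n S0 S1 a ∩ qCol n S0 S1 b = ∅ ∧
    (SimpleGraph.fromEdgeSet (qCol n S0 S1 a ∪ qCol n S0 S1 b)).IsAcyclic ∧
    ¬ (SimpleGraph.fromEdgeSet (qCol n S0 S1 a ∪ qCol n S0 S1 b)).Reachable a b

/-! Deleting the vertex `∞₂` from the Hamiltonian cycle `F a ∪ F b` leaves a path, so in particular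
an acyclic graph. In it `a` and `b` are the neighbours of `∞₁`, hence the unique path between them
runs through `∞₁`. The columns `a + C₀` and `b + C₀` are the edges of `F a` and `F b` that avoid
both infinite points, so their union is acyclic and does not connect `a` to `b`. -/

section Graph

open SimpleGraph

variable {V W : Type*} {G : SimpleGraph V}

lemma finite_neighborSet_of_isCycles (hG : G.IsCycles) (v : V) : (G.neighborSet v).Finite := by
  rcases (G.neighborSet v).eq_empty_or_nonempty with hempty | hne
  · exact hempty ▸ Set.finite_empty
  · exact Set.finite_of_ncard_ne_zero (by rw [hG hne]; exact two_ne_zero)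

lemma mem_support_of_isCycle_of_isCycles (hconn : G.Preconnected) (hG : G.IsCycles) {u : V}
    {c : G.Walk u u} (hc : c.IsCycle) (w : V) : w ∈ c.support := by
  have : G.LocallyFinite := fun v ↦ (finite_neighborSet_of_isCycles hG v).fintype
  by_contra hw
  obtain ⟨p⟩ := hconn u w
  obtain ⟨d, -, hfst, hsnd⟩ :=
    p.exists_boundary_dart {x | x ∈ c.support} c.start_mem_support hw
  have hadj : c.toSubgraph.Adj d.fst d.snd :=
    (hc.adj_toSubgraph_iff_of_isCycles hG (c.mem_verts_toSubgraph.2 hfst) d.snd).2 d.adj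
  exact hsnd (c.mem_verts_toSubgraph.1 hadj.snd_mem)

lemma isAcyclic_deleteIncidenceSet_of_isCycles (hconn : G.Preconnected) (hG : G.IsCycles)
    (w : V) : (G.deleteIncidenceSet w).IsAcyclic := by
  intro u c hc
  have hw : w ∈ c.support := by
    simpa using mem_support_of_isCycle_of_isCycles hconn hG
      (hc.mapLe (G.deleteIncidenceSet_le w)) w
  have hdeg : (c.toSubgraph.neighborSet w).ncard = 2 := hc.ncard_neighborSet_toSubgraph_eq_two hw
  obtain ⟨x, hx⟩ : (c.toSubgraph.neighborSet w).Nonempty :=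
    Set.nonempty_of_ncard_ne_zero (by rw [hdeg]; exact two_ne_zero)
  exact (G.deleteIncidenceSet_adj.1 hx.adj_sub).2.1 rfl

lemma not_reachable_of_hom_of_isAcyclic {K : SimpleGraph W} (hG : G.IsAcyclic) (f : K →g G)
    {v : V} (hv : v ∉ Set.range f) {a b : W} (ha : G.Adj (f a) v) (hb : G.Adj (f b) v)
    (hab : f a ≠ f b) : ¬ K.Reachable a b := by
  classical
  rintro ⟨p⟩
  have hvp : v ∈ (p.map f).bypass.support :=
    hG.mem_support_of_ne_mem_support_of_adj_of_isPath (p.map f).bypass_isPath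
      (Walk.IsPath.of_adj ha) hb (by simp [hab.symm, hb.ne])
  have hvf : v ∈ p.support.map f := by
    simpa only [Walk.support_map] using (p.map f).support_bypass_subset_support hvp
  obtain ⟨w, -, rfl⟩ := List.mem_map.1 hvf
  exact hv ⟨w, rfl⟩

lemma comap_deleteIncidenceSet (G : SimpleGraph V) {f : W → V} {v : V} (hv : v ∉ Set.range f) :
    (G.deleteIncidenceSet v).comap f = G.comap f := by
  have hne : ∀ x, f x ≠ v := fun x h ↦ hv ⟨x, h⟩
  ext x y
  simp [deleteIncidenceSet_adj, hne]

end Graph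

section UnorderedPairs

variable {α β : Type*}

lemma image_sym2_map_eq_preimage {f : α → β} {g : β → α}
    (hgf : Function.LeftInverse g f) (hfg : Function.RightInverse g f) (E : Set (Sym2 α)) :
    Sym2.map f '' E = Sym2.map g ⁻¹' E := by
  refine congrFun (Set.image_eq_preimage_of_inverse (fun e ↦ ?_) fun e ↦ ?_) E
  · rw [Sym2.map_map, hgf.comp_eq_id, Sym2.map_id, id]
  · rw [Sym2.map_map, hfg.comp_eq_id, Sym2.map_id, id]

lemma two_mul_ncard_of_existsUnique_mem [Finite α] {M : Set (Sym2 α)}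
    (hdiag : ∀ e ∈ M, ¬ e.IsDiag) (hM : ∀ v, ∃! e, e ∈ M ∧ v ∈ e) :
    2 * M.ncard = Nat.card α := by
  classical
  have := Fintype.ofFinite α
  have hvertex : ∀ v ∈ (Finset.univ : Finset α),
      (M.toFinset.bipartiteAbove (· ∈ ·) v).card = 1 := by
    intro v _
    obtain ⟨e, he, huniq⟩ := hM v
    refine Finset.card_eq_one.2 ⟨e, Finset.ext fun e' ↦ ?_⟩
    simpa [Finset.mem_bipartiteAbove] using ⟨fun h ↦ huniq e' h, fun h ↦ h ▸ he⟩
  have hedge : ∀ e ∈ M.toFinset, (Finset.univ.bipartiteBelow (· ∈ ·) e).card = 2 := by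
    intro e he
    rw [← Sym2.card_toFinset_of_not_isDiag e (hdiag e (Set.mem_toFinset.1 he))]
    congr 1
    ext v
    simp [Finset.mem_bipartiteBelow]
  have hcount := Finset.card_mul_eq_card_mul (· ∈ ·) hvertex hedge
  rw [Set.ncard_eq_toFinset_card', Nat.card_eq_fintype_card, ← Finset.card_univ]
  lia

lemma map_inl_injective : Function.Injective (Sym2.map (Sum.inl : α → α ⊕ β)) :=
  Sym2.map.injective Sum.inl_injective

lemma mem_range_map_inl {e : Sym2 (α ⊕ β)} :
    e ∈ Set.range (Sym2.map (Sum.inl : α → α ⊕ β)) ↔ ∀ b, Sum.inr b ∉ e := by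
  rw [← Set.image_univ, ← Set.sym2_univ, ← Set.sym2_image, Set.mem_sym2_iff_subset, Set.image_univ,
    ← Set.compl_range_inr, Set.subset_compl_comm, Set.range_subset_iff]
  rfl

end UnorderedPairs

section FinitePart

variable {α β : Type*}

/-- The edges of `E` with both endpoints in `α`, as edges on `α`. For `α = ZMod (2 * n)` and
`β = {∞₁, ∞₂}` this turns a one-factor of `G_{2n+2}` into a column of the code. -/
def finitePart (E : Set (Sym2 (α ⊕ β))) : Set (Sym2 α) :=
  Sym2.map Sum.inl ⁻¹' E

lemma finitePart_inter (E E' : Set (Sym2 (α ⊕ β))) :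
    finitePart (E ∩ E') = finitePart E ∩ finitePart E' := rfl

lemma finitePart_union (E E' : Set (Sym2 (α ⊕ β))) :
    finitePart (E ∪ E') = finitePart E ∪ finitePart E' := rfl

lemma fromEdgeSet_finitePart (E : Set (Sym2 (α ⊕ β))) :
    SimpleGraph.fromEdgeSet (finitePart E) = (SimpleGraph.fromEdgeSet E).comap Sum.inl := by
  ext x y
  simp [finitePart]

end FinitePart

namespace IsHamCycleOn

lemma isAcyclic_deleteIncidenceSet {V : Type} {E : Set (Sym2 V)} (hE : IsHamCycleOn E) (w : V) :
    ((SimpleGraph.fromEdgeSet E).deleteIncidenceSet w).IsAcyclic :=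
  isAcyclic_deleteIncidenceSet_of_isCycles hE.1.preconnected (fun v _ ↦ hE.2 v) w

variable {α β : Type} {E : Set (Sym2 (α ⊕ β))}

lemma isAcyclic_finitePart [Nonempty β] (hE : IsHamCycleOn E) :
    (SimpleGraph.fromEdgeSet (finitePart E)).IsAcyclic := by
  obtain ⟨c⟩ := ‹Nonempty β›
  rw [fromEdgeSet_finitePart, ← comap_deleteIncidenceSet _ (v := Sum.inr c) (by simp)]
  exact (hE.isAcyclic_deleteIncidenceSet (Sum.inr c)).of_comap .inl

lemma not_reachable_finitePart [Nontrivial β] (hE : IsHamCycleOn E) {a b : α} (hab : a ≠ b) {c : β}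
    (ha : s(Sum.inl a, Sum.inr c) ∈ E) (hb : s(Sum.inl b, Sum.inr c) ∈ E) :
    ¬ (SimpleGraph.fromEdgeSet (finitePart E)).Reachable a b := by
  obtain ⟨d, hdc⟩ := exists_ne c
  rw [fromEdgeSet_finitePart, ← comap_deleteIncidenceSet _ (v := Sum.inr d) (by simp)]
  refine not_reachable_of_hom_of_isAcyclic (hE.isAcyclic_deleteIncidenceSet (Sum.inr d))
    (SimpleGraph.Hom.comap Sum.inl _) (v := Sum.inr c) ?_ ?_ ?_ ?_
  all_goals simp [SimpleGraph.deleteIncidenceSet_adj, ha, hb, hab, hdc.symm]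

end IsHamCycleOn

namespace IsOneFactor

variable {n : ℕ} {F : Set (Sym2 (Vtx n))}

lemma not_isDiag (hF : IsOneFactor n F) {e : Sym2 (Vtx n)} (he : e ∈ F) : ¬ e.IsDiag :=
  (Ggraph n).not_isDiag_of_mem_edgeSet (hF.1 he)

lemma mem_iff_eq (hF : IsOneFactor n F) {e e₀ : Sym2 (Vtx n)} (he₀ : e₀ ∈ F) {v : Vtx n}
    (hv : v ∈ e₀) (he : e ∈ F) : v ∈ e ↔ e = e₀ :=
  ⟨fun hve ↦ (hF.2 v).unique ⟨he, hve⟩ ⟨he₀, hv⟩, fun h ↦ h ▸ hv⟩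

lemma ncard_eq (hn : n ≠ 0) (hF : IsOneFactor n F) : F.ncard = n + 1 := by
  have : NeZero (2 * n) := ⟨by lia⟩
  have hcount := two_mul_ncard_of_existsUnique_mem (fun _ ↦ hF.not_isDiag) hF.2
  rw [Nat.card_sum, Nat.card_zmod, Nat.card_eq_fintype_card, Fintype.card_bool] at hcount
  lia

lemma image_finitePart (hF : IsOneFactor n F) {r₁ r₂ : ZMod (2 * n)}
    (h₁ : s(Sum.inl r₁, Sum.inr false) ∈ F) (h₂ : s(Sum.inl r₂, Sum.inr true) ∈ F) :
    Sym2.map Sum.inl '' finitePart F =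
      F \ {s(Sum.inl r₁, Sum.inr false), s(Sum.inl r₂, Sum.inr true)} := by
  rw [finitePart, Set.image_preimage_eq_inter_range]
  ext e
  refine and_congr_right fun he ↦ ?_
  rw [mem_range_map_inl, Bool.forall_bool, hF.mem_iff_eq h₁ (Sym2.mem_mk_right _ _) he,
    hF.mem_iff_eq h₂ (Sym2.mem_mk_right _ _) he, ← not_or]
  rfl

lemma ncard_finitePart (hn : n ≠ 0) (hF : IsOneFactor n F) {r₁ r₂ : ZMod (2 * n)}
    (h₁ : s(Sum.inl r₁, Sum.inr false) ∈ F) (h₂ : s(Sum.inl r₂, Sum.inr true) ∈ F) :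
    (finitePart F).ncard = n - 1 := by
  rw [← Set.ncard_image_of_injective _ map_inl_injective, hF.image_finitePart h₁ h₂,
    Set.ncard_sdiff (Set.pair_subset h₁ h₂), hF.ncard_eq hn, Set.ncard_pair (by simp)]
  rfl

lemma isPairing_finitePart (hn : n ≠ 0) (hF : IsOneFactor n F) {r : ZMod (2 * n)}
    (h₁ : s(Sum.inl 0, Sum.inr false) ∈ F) (h₂ : s(Sum.inl r, Sum.inr true) ∈ F) :
    IsPairing (2 * n) (n - 1) (finitePart F) := by
  have inl_mem {a : ZMod (2 * n)} {e : Sym2 (ZMod (2 * n))} (ha : a ∈ e) :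
      (Sum.inl a : Vtx n) ∈ e.map Sum.inl := Sym2.mem_map.2 ⟨a, ha, rfl⟩
  refine ⟨hF.ncard_finitePart hn h₁ h₂, fun e he hdiag ↦ hF.not_isDiag he hdiag.map,
    fun e he h0 ↦ ?_, fun e he e' he' hne a ha ha' ↦ ?_⟩
  · have heq := (hF.mem_iff_eq h₁ (Sym2.mem_mk_left _ _) he).1 (inl_mem h0)
    exact mem_range_map_inl.1 ⟨e, heq⟩ false (Sym2.mem_mk_right _ _)
  · exact hne (map_inl_injective ((hF.mem_iff_eq he' (inl_mem ha') he).1 (inl_mem ha)))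

end IsOneFactor

lemma vshift_vshift_neg {n : ℕ} (i : ZMod (2 * n)) (v : Vtx n) :
    vshift n i (vshift n (-i) v) = v := by
  cases v <;> simp [vshift]

lemma shiftSet_finitePart {n : ℕ} (i : ZMod (2 * n)) (E : Set (Sym2 (Vtx n))) :
    shiftSet i (finitePart E) = finitePart (Sym2.map (vshift n i) '' E) := by
  rw [shiftSet, image_sym2_map_eq_preimage (g := (· + -i)) (fun x ↦ add_neg_cancel_right x i)
      (fun x ↦ neg_add_cancel_right x i),
    image_sym2_map_eq_preimage (g := vshift n (-i))
      (fun v ↦ by simpa only [neg_neg] using vshift_vshift_neg (-i) v) (vshift_vshift_neg i)]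
  ext e
  simp only [finitePart, Set.mem_preimage, Sym2.map_map]
  rfl

namespace IsBipyramidalOF

variable {n : ℕ} {F : ZMod (2 * n) → Set (Sym2 (Vtx n))}

lemma shiftSet_finitePart_zero (hF : IsBipyramidalOF n F) (i : ZMod (2 * n)) :
    shiftSet i (finitePart (F 0)) = finitePart (F i) := by
  rw [hF.2.2.2 i, shiftSet_finitePart]

lemma mk_inl_inr_mem (hF : IsBipyramidalOF n F) {c : Bool}
    (h : s(Sum.inl 0, Sum.inr c) ∈ F 0) (i : ZMod (2 * n)) : s(Sum.inl i, Sum.inr c) ∈ F i := by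
  rw [hF.2.2.2 i]
  exact ⟨_, h, by simp [vshift]⟩

end IsBipyramidalOF

lemma IsBipyramidalP1F.cCodeCond_finitePart {n : ℕ} {F : ZMod (2 * n) → Set (Sym2 (Vtx n))}
    (hF : IsBipyramidalP1F n F) {c : Bool} (h : s(Sum.inl 0, Sum.inr c) ∈ F 0) :
    CCodeCond (2 * n) (finitePart (F 0)) := by
  intro a b hab
  obtain ⟨hOF, hham⟩ := hF
  rw [hOF.shiftSet_finitePart_zero, hOF.shiftSet_finitePart_zero, ← finitePart_inter,
    ← finitePart_union, hOF.2.1 a b hab]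
  exact ⟨Set.preimage_empty, (hham a b hab).isAcyclic_finitePart,
    (hham a b hab).not_reachable_finitePart hab
      (Or.inl (hOF.mk_inl_inr_mem h a)) (Or.inr (hOF.mk_inl_inr_mem h b))⟩

/-- From a bipyramidal P1F of `G_{2n+2}` with `{0,∞₁} ∈ F 0` and
`{r,∞₂} ∈ F 0`, the set `C0` with `C0` (viewed inside the vertex set) equal to
`F 0 \ {{0,∞₁},{r,∞₂}}` defines a C-code of length `2n`. -/
theorem stmt0 (n : ℕ) (hn : 2 ≤ n)
    (F : ZMod (2*n) → Set (Sym2 (Vtx n)))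
    (hF : IsBipyramidalP1F n F)
    (h1 : s((Sum.inl (0 : ZMod (2*n)) : Vtx n), Sum.inr false) ∈ F 0)
    (r : ZMod (2*n))
    (h2 : s((Sum.inl r : Vtx n), Sum.inr true) ∈ F 0)
    (C0 : Set (Sym2 (ZMod (2*n))))
    (hC0 : (Sym2.map (Sum.inl : ZMod (2*n) → Vtx n)) '' C0 =
      F 0 \ {s((Sum.inl (0 : ZMod (2*n)) : Vtx n), Sum.inr false),
             s((Sum.inl r : Vtx n), Sum.inr true)}) :
    IsCCode n C0 := by
  have hfactor : IsOneFactor n (F 0) := hF.1.1 0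
  obtain rfl : C0 = finitePart (F 0) :=
    map_inl_injective.image_injective (hC0.trans (hfactor.image_finitePart h1 h2).symm)
  exact ⟨hfactor.isPairing_finitePart (by lia) h1 h2, hF.cCodeCond_finitePart h1⟩
end

section
/- Let n ≥ 2 and let C₀ be a set of n−1 pairwise disjoint unordered pairs of nonzero elements of Z_{2n} that defines a C-code of length 2n. Let r be the unique nonzero element of Z_{2n} occurring in no pair of C₀. Then no pair of C₀ has difference n, and the sets F_i = {{x+i, y+i} : {x,y} ∈ C₀} ∪ {{i,∞₁},{i+r,∞₂}} for i ∈ Z_{2n} form a bipyramidal perfect one-factorization (bipyramidal P1F) of G_{2n+2}: each F_i is a perfect matching of G_{2n+2}, the F_i are pairwise edge-disjoint with union the entire edge set of G_{2n+2}, F_i = σ^i(F₀) for all i, and for all j ≠ k the graph with edge set F_j ∪ F_k is connected with every vertex of degree 2. -/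
/-!
Read each pair of `C₀` as two ordered pairs; there are `2n - 2` of them. First entries of
distinct ordered pairs differ because `C₀` is a pairing, and they avoid `0` and `r`. Differences
of distinct ordered pairs differ because distinct translates of `C₀` share no pair, and they
avoid `0` and `n` (a pair with difference `n` would be fixed by translation by `n`). By
pigeonhole, every element other than `0, r` is matched, so each `F i` is a perfect matching, and
every difference other than `0, n` occurs exactly once, so each edge of `G_{2n+2}` lies in
exactly one `F i`.

For `j ≠ k`, the graph `C_j ∪ C_k` is a forest with `2n - 2` edges on `2n` vertices. As `j` and `k`
lie in different components, adding the edge `{j, k}` gives a tree. In `F j ∪ F k` the path through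
`∞₁` replaces that edge and `∞₂` hangs on `j + r`, so `F j ∪ F k` is connected.
-/

open SimpleGraph

section Graph

variable {V W : Type*} {G : SimpleGraph V} {H : SimpleGraph W}

lemma reachable_apply_of_forall_adj {f : V → W}
    (h : ∀ x y, G.Adj x y → H.Reachable (f x) (f y)) {x y : V} (hxy : G.Reachable x y) :
    H.Reachable (f x) (f y) := by
  simp only [reachable_iff_reflTransGen] at h hxy ⊢
  exact hxy.lift' f h

lemma connected_of_isAcyclic_of_card_le [Finite V] [Nonempty V] (hG : G.IsAcyclic)
    (hcard : Nat.card V ≤ G.edgeSet.ncard + 1) : G.Connected := by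
  obtain ⟨T, hGT, -, hT⟩ := connected_top.exists_isTree_le_of_le_of_isAcyclic le_top hG
  have hTcard : T.edgeSet.ncard + 1 = Nat.card V := (isTree_iff_connected_and_card.1 hT).2
  have hedge : G.edgeSet = T.edgeSet :=
    Set.eq_of_subset_of_ncard_le (edgeSet_mono hGT) (by omega)
  exact edgeSet_injective hedge ▸ hT.connected

lemma connected_sup_edge_of_card_le [Finite V] {a b : V} (hG : G.IsAcyclic)
    (hab : ¬ G.Reachable a b) (hcard : Nat.card V ≤ G.edgeSet.ncard + 2) :
    (G ⊔ edge a b).Connected := by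
  have : Nonempty V := ⟨a⟩
  have hne : a ≠ b := fun h => hab (h ▸ Reachable.refl a)
  have hnew : s(a, b) ∉ G.edgeSet := fun h => hab (Adj.reachable h)
  refine connected_of_isAcyclic_of_card_le (hG.sup_edge_of_not_reachable hab) ?_
  rwa [edgeSet_sup, edgeSet_edge_of_ne hne, Set.union_singleton, Set.ncard_insert_of_notMem hnew]

lemma edgeSet_fromEdgeSet_of_forall_not_isDiag {E : Set (Sym2 V)} (hE : ∀ e ∈ E, ¬ e.IsDiag) :
    (fromEdgeSet E).edgeSet = E := by
  rw [edgeSet_fromEdgeSet, sdiff_eq_left]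
  exact Set.disjoint_left.2 hE

lemma mk_dart_mem {E : Set (Sym2 V)} (d : (fromEdgeSet E).Dart) : s(d.fst, d.snd) ∈ E :=
  ((fromEdgeSet_adj E).1 d.adj).1

lemma existsUnique_mem_and_mem_iff {E : Set (Sym2 V)} {v : V} :
    (∃! e, e ∈ E ∧ v ∈ e) ↔ ∃! w, s(v, w) ∈ E := by
  constructor
  · rintro ⟨_, ⟨he, w, rfl⟩, huniq⟩
    exact ⟨w, he, fun u hu => Sym2.congr_right.1 (huniq _ ⟨hu, Sym2.mem_mk_left v u⟩)⟩
  · rintro ⟨w, hw, huniq⟩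
    refine ⟨s(v, w), ⟨hw, Sym2.mem_mk_left v w⟩, ?_⟩
    rintro _ ⟨hu, u, rfl⟩
    rw [huniq u hu]

lemma ncard_neighborSet_fromEdgeSet_union {E E' : Set (Sym2 V)} (hdisj : Disjoint E E')
    (hdiag : ∀ e ∈ E ∪ E', ¬ e.IsDiag) {v : V} (hE : ∃! e, e ∈ E ∧ v ∈ e)
    (hE' : ∃! e, e ∈ E' ∧ v ∈ e) : ((fromEdgeSet (E ∪ E')).neighborSet v).ncard = 2 := by
  obtain ⟨a, ha, ha_uniq⟩ := existsUnique_mem_and_mem_iff.1 hE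
  obtain ⟨b, hb, hb_uniq⟩ := existsUnique_mem_and_mem_iff.1 hE'
  have hab : a ≠ b := by
    rintro rfl
    exact hdisj.notMem_of_mem_left ha hb
  have hnbr : (fromEdgeSet (E ∪ E')).neighborSet v = {a, b} := by
    ext u
    rw [mem_neighborSet, ← mem_edgeSet, edgeSet_fromEdgeSet_of_forall_not_isDiag hdiag]
    constructor
    · exact Or.imp (ha_uniq u) (hb_uniq u)
    · rintro (rfl | rfl)
      exacts [Or.inl ha, Or.inr hb]
  rw [hnbr, Set.ncard_pair hab]

end Graph

lemma exists_apply_eq_of_injective_of_card_le {α β : Type*} [Finite β] {f : α → β}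
    (hf : Function.Injective f) {a b : β} (hab : a ≠ b) (ha : ∀ x, f x ≠ a) (hb : ∀ x, f x ≠ b)
    (hcard : Nat.card β ≤ Nat.card α + 2) {y : β} (hya : y ≠ a) (hyb : y ≠ b) :
    ∃ x, f x = y := by
  have hsub : Set.range f ⊆ {a, b}ᶜ := by
    rintro _ ⟨x, rfl⟩
    simp [ha, hb]
  have hrange : (Set.range f).ncard = Nat.card α := Set.ncard_range_of_injective hf
  have hcompl : ({a, b}ᶜ : Set β).ncard = Nat.card β - 2 := by
    rw [Set.ncard_compl, Set.ncard_pair hab]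
  have heq : Set.range f = {a, b}ᶜ := Set.eq_of_subset_of_ncard_le hsub (by omega)
  exact Set.mem_range.1 (heq ▸ by simp [hya, hyb])

lemma natCast_add_self (n : ℕ) : (n : ZMod (2 * n)) + n = 0 := by
  rw [← two_mul]
  exact_mod_cast ZMod.natCast_self (2 * n)

section Shift

variable {m : ℕ} {C : Set (Sym2 (ZMod m))}

lemma mk_mem_shiftSet {i x y : ZMod m} : s(x, y) ∈ shiftSet i C ↔ s(x - i, y - i) ∈ C := by
  have hmap : s(x, y) = Sym2.map (· + i) s(x - i, y - i) := by simp
  rw [shiftSet, hmap, (Sym2.map.injective (add_left_injective i)).mem_set_image]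

lemma ncard_shiftSet (i : ZMod m) : (shiftSet i C).ncard = C.ncard :=
  Set.ncard_image_of_injective _ (Sym2.map.injective (add_left_injective i))

end Shift

namespace IsPairing

variable {m k : ℕ} {C : Set (Sym2 (ZMod m))} {x y z : ZMod m}

lemma ne (hC : IsPairing m k C) (h : s(x, y) ∈ C) : x ≠ y :=
  hC.2.1 _ h

lemma mk_zero_notMem (hC : IsPairing m k C) : s(0, y) ∉ C :=
  fun h => hC.2.2.1 _ h (Sym2.mem_mk_left 0 y)

lemma right_unique (hC : IsPairing m k C) (hy : s(x, y) ∈ C) (hz : s(x, z) ∈ C) : y = z := by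
  by_contra hne
  exact hC.2.2.2 _ hy _ hz (mt Sym2.congr_right.1 hne) x (Sym2.mem_mk_left x y)
    (Sym2.mem_mk_left x z)

lemma not_isDiag_of_mem_shiftSet (hC : IsPairing m k C) {i : ZMod m} :
    ∀ e ∈ shiftSet i C, ¬ e.IsDiag := by
  rintro ⟨x, y⟩ he hxy
  exact hC.ne (mk_mem_shiftSet.1 he) (congrArg (· - i) hxy)

lemma card_dart_fromEdgeSet [NeZero m] (hC : IsPairing m k C) :
    Nat.card (fromEdgeSet C).Dart = 2 * k := by
  classical
  rw [Nat.card_eq_fintype_card, dart_card_eq_twice_card_edges, ← Set.ncard_coe_finset,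
    coe_edgeFinset, edgeSet_fromEdgeSet_of_forall_not_isDiag hC.2.1, hC.1]

lemma exists_mk_mem [NeZero m] (hC : IsPairing m k C) (hm : m ≤ 2 * k + 2) {r : ZMod m}
    (hr0 : r ≠ 0) (hr : ∀ e ∈ C, r ∉ e) (hx0 : x ≠ 0) (hxr : x ≠ r) : ∃ y, s(x, y) ∈ C := by
  have hinj : Function.Injective fun d : (fromEdgeSet C).Dart => d.fst := by
    intro d d' (h : d.fst = d'.fst)
    exact Dart.ext _ _ (Prod.ext h (hC.right_unique (mk_dart_mem d) (h ▸ mk_dart_mem d')))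
  obtain ⟨d, rfl⟩ := exists_apply_eq_of_injective_of_card_le hinj hr0.symm
    (fun d h => hC.2.2.1 _ (mk_dart_mem d) (h ▸ Sym2.mem_mk_left _ _))
    (fun d h => hr _ (mk_dart_mem d) (h ▸ Sym2.mem_mk_left _ _))
    (by rwa [Nat.card_zmod, hC.card_dart_fromEdgeSet]) hx0 hxr
  exact ⟨d.snd, mk_dart_mem d⟩

end IsPairing

lemma CCodeCond.fst_eq_of_sub_eq {m : ℕ} {C : Set (Sym2 (ZMod m))} (hC : CCodeCond m C)
    {x y x' y' : ZMod m} (h : s(x, y) ∈ C) (h' : s(x', y') ∈ C) (hsub : y - x = y' - x') :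
    x = x' := by
  by_contra hne
  have hcommon : s(x + x', x + y') ∈ shiftSet x' C ∩ shiftSet x C := by
    constructor
    · rwa [mk_mem_shiftSet, add_sub_cancel_right, show x + y' - x' = y by grind]
    · rwa [mk_mem_shiftSet, add_sub_cancel_left, add_sub_cancel_left]
  rw [(hC x' x (Ne.symm hne)).1] at hcommon
  exact hcommon

namespace IsCCode

variable {n : ℕ} {C : Set (Sym2 (ZMod (2 * n)))}

lemma sub_ne_natCast (hC : IsCCode n C) {x y : ZMod (2 * n)} (h : s(x, y) ∈ C) :
    y - x ≠ n := by
  intro hsub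
  have hswap : s(y, x) ∈ C := Sym2.eq_swap ▸ h
  exact hC.1.ne h (hC.2.fst_eq_of_sub_eq h hswap
    (by linear_combination 2 * hsub + natCast_add_self n))

lemma exists_sub_eq [NeZero n] (hC : IsCCode n C) {d : ZMod (2 * n)} (hd0 : d ≠ 0)
    (hdn : d ≠ n) : ∃ x y, s(x, y) ∈ C ∧ y - x = d := by
  have hn : (0 : ZMod (2 * n)) ≠ n := by
    have := NeZero.pos n
    rw [ne_comm, ne_eq, ZMod.natCast_eq_zero_iff]
    exact Nat.not_dvd_of_pos_of_lt this (by omega)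
  have hinj : Function.Injective fun e : (fromEdgeSet C).Dart => e.snd - e.fst := by
    intro e e' h
    have hfst : e.fst = e'.fst := hC.2.fst_eq_of_sub_eq (mk_dart_mem e) (mk_dart_mem e') h
    exact Dart.ext _ _ (Prod.ext hfst (hC.1.right_unique (mk_dart_mem e) (hfst ▸ mk_dart_mem e')))
  obtain ⟨e, he⟩ := exists_apply_eq_of_injective_of_card_le hinj hn
    (fun e => sub_ne_zero.2 (hC.1.ne (mk_dart_mem e)).symm)
    (fun e => hC.sub_ne_natCast (mk_dart_mem e))
    (by rw [Nat.card_zmod, hC.1.card_dart_fromEdgeSet]; omega) hd0 hdn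
  exact ⟨e.fst, e.snd, mk_dart_mem e, he⟩

lemma connected_sup_edge [NeZero n] (hC : IsCCode n C) {j k : ZMod (2 * n)} (hjk : j ≠ k) :
    (fromEdgeSet (shiftSet j C ∪ shiftSet k C) ⊔ edge j k).Connected := by
  obtain ⟨hdisj, hacyclic, hreach⟩ := hC.2 j k hjk
  have hdiag : ∀ e ∈ shiftSet j C ∪ shiftSet k C, ¬ e.IsDiag := fun e he =>
    he.elim (hC.1.not_isDiag_of_mem_shiftSet e) (hC.1.not_isDiag_of_mem_shiftSet e)
  refine connected_sup_edge_of_card_le hacyclic hreach ?_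
  rw [edgeSet_fromEdgeSet_of_forall_not_isDiag hdiag,
    Set.ncard_union_eq (Set.disjoint_iff_inter_eq_empty.2 hdisj), ncard_shiftSet, ncard_shiftSet,
    hC.1.1, Nat.card_zmod]
  omega

end IsCCode

section Ggraph

variable {n : ℕ} {x y : ZMod (2 * n)} {b c : Bool}

@[simp]
lemma Ggraph_adj_inl_inl : (Ggraph n).Adj (Sum.inl x) (Sum.inl y) ↔ x ≠ y ∧ y - x ≠ n := by
  have hsymm : x = y + n ↔ y = x + n :=
    ⟨fun h => by linear_combination -h - natCast_add_self n,
      fun h => by linear_combination -h - natCast_add_self n⟩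
  simp [Ggraph, sub_eq_iff_eq_add', hsymm]

@[simp]
lemma Ggraph_adj_inl_inr : (Ggraph n).Adj (Sum.inl x) (Sum.inr b) := by
  simp [Ggraph]

@[simp]
lemma not_Ggraph_adj_inr_inr : ¬ (Ggraph n).Adj (Sum.inr b) (Sum.inr c) := by
  simp [Ggraph]

end Ggraph

section Sum

variable {α β : Type*} {S : Set (Sym2 α)}

lemma mk_inl_inl_mem_image_map_inl {x y : α} :
    s((Sum.inl x : α ⊕ β), Sum.inl y) ∈ Sym2.map Sum.inl '' S ↔ s(x, y) ∈ S := by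
  rw [← Sym2.map_mk, (Sym2.map.injective Sum.inl_injective).mem_set_image]

lemma mk_inr_notMem_image_map_inl {v : α ⊕ β} {b : β} :
    s(v, Sum.inr b) ∉ Sym2.map Sum.inl '' S := by
  rintro ⟨e, -, he⟩
  have hb : Sum.inr b ∈ Sym2.map Sum.inl e := he ▸ Sym2.mem_mk_right v (Sum.inr b)
  simp at hb

@[elab_as_elim]
lemma sym2_sum_ind {p : Sym2 (α ⊕ β) → Prop}
    (inl_inl : ∀ x y, p s(Sum.inl x, Sum.inl y)) (inl_inr : ∀ x b, p s(Sum.inl x, Sum.inr b))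
    (inr_inr : ∀ b c, p s(Sum.inr b, Sum.inr c)) (e : Sym2 (α ⊕ β)) : p e := by
  induction e using Sym2.ind with
  | _ u v =>
    rcases u with x | b <;> rcases v with y | c
    exacts [inl_inl x y, inl_inr x c, Sym2.eq_swap ▸ inl_inr y b, inr_inr b c]

end Sum

/-- The `i`-th factor `{{x + i, y + i} : {x, y} ∈ C} ∪ {{i, ∞₁}, {i + r, ∞₂}}` of the
factorization of `G_{2n+2}` that a C-code `C` with unmatched nonzero element `r` induces. -/
def bipyramidFactor {n : ℕ} (C : Set (Sym2 (ZMod (2 * n)))) (r i : ZMod (2 * n)) :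
    Set (Sym2 (Vtx n)) :=
  Sym2.map Sum.inl '' shiftSet i C ∪
    {s(Sum.inl i, Sum.inr false), s(Sum.inl (i + r), Sum.inr true)}

namespace bipyramidFactor

variable {n : ℕ} {C : Set (Sym2 (ZMod (2 * n)))} {r i j k x y : ZMod (2 * n)} {b c : Bool}

@[simp]
lemma mk_inl_inl_mem :
    s(Sum.inl x, Sum.inl y) ∈ bipyramidFactor C r i ↔ s(x - i, y - i) ∈ C := by
  simp [bipyramidFactor, mk_inl_inl_mem_image_map_inl, mk_mem_shiftSet, -Set.mem_image]

@[simp]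
lemma mk_inl_inr_false_mem : s(Sum.inl x, Sum.inr false) ∈ bipyramidFactor C r i ↔ x = i := by
  simp [bipyramidFactor, mk_inr_notMem_image_map_inl, -Set.mem_image]

@[simp]
lemma mk_inl_inr_true_mem : s(Sum.inl x, Sum.inr true) ∈ bipyramidFactor C r i ↔ x = i + r := by
  simp [bipyramidFactor, mk_inr_notMem_image_map_inl, -Set.mem_image]

@[simp]
lemma mk_inr_inr_notMem : s(Sum.inr b, Sum.inr c) ∉ bipyramidFactor C r i := by
  simp [bipyramidFactor, mk_inr_notMem_image_map_inl, -Set.mem_image]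

lemma image_vshift :
    Sym2.map (vshift n j) '' bipyramidFactor C r i = bipyramidFactor C r (i + j) := by
  have hshift : vshift n j ∘ Sum.inl ∘ (· + i) = Sum.inl ∘ (· + (i + j)) :=
    funext fun x => congrArg Sum.inl (add_assoc x i j)
  simp only [bipyramidFactor, shiftSet, Set.image_union, Set.image_pair, Set.image_image,
    Sym2.map_map, Sym2.map_mk, vshift, hshift, add_right_comm i r j]

lemma subset_edgeSet (hC : IsCCode n C) : bipyramidFactor C r i ⊆ (Ggraph n).edgeSet := by
  intro e he
  induction e using sym2_sum_ind with
  | inl_inl x y =>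
    rw [mk_inl_inl_mem] at he
    rw [mem_edgeSet, Ggraph_adj_inl_inl, ← sub_sub_sub_cancel_right y x i]
    exact ⟨fun h => hC.1.ne he (congrArg (· - i) h), hC.sub_ne_natCast he⟩
  | inl_inr x b => exact Ggraph_adj_inl_inr
  | inr_inr b c => exact absurd he mk_inr_inr_notMem

lemma exists_mem [NeZero n] (hC : IsCCode n C) {e : Sym2 (Vtx n)}
    (he : e ∈ (Ggraph n).edgeSet) : ∃ i, e ∈ bipyramidFactor C r i := by
  induction e using sym2_sum_ind with
  | inl_inl x y =>
    obtain ⟨hxy, hsub⟩ := Ggraph_adj_inl_inl.1 he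
    obtain ⟨a, b, hab, hba⟩ := hC.exists_sub_eq (sub_ne_zero.2 hxy.symm) hsub
    have hb : y - (x - a) = b := by linear_combination -hba
    exact ⟨x - a, by simpa [hb] using hab⟩
  | inl_inr x b =>
    cases b
    · exact ⟨x, by simp⟩
    · exact ⟨x - r, by simp⟩
  | inr_inr b c => exact absurd he not_Ggraph_adj_inr_inr

lemma iUnion_eq_edgeSet [NeZero n] (hC : IsCCode n C) :
    ⋃ i, bipyramidFactor C r i = (Ggraph n).edgeSet :=
  (Set.iUnion_subset fun _ => subset_edgeSet hC).antisymm fun _ he =>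
    Set.mem_iUnion.2 (exists_mem hC he)

lemma disjoint (hC : CCodeCond (2 * n) C) (hjk : j ≠ k) :
    Disjoint (bipyramidFactor C r j) (bipyramidFactor C r k) := by
  refine Set.disjoint_left.2 fun e hj hk => hjk ?_
  induction e using sym2_sum_ind with
  | inl_inl x y =>
    have hfst : x - j = x - k := hC.fst_eq_of_sub_eq (mk_inl_inl_mem.1 hj) (mk_inl_inl_mem.1 hk)
      (by rw [sub_sub_sub_cancel_right, sub_sub_sub_cancel_right])
    exact sub_right_injective hfst
  | inl_inr x b =>
    cases b
    · exact (mk_inl_inr_false_mem.1 hj).symm.trans (mk_inl_inr_false_mem.1 hk)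
    · exact add_left_injective r
        ((mk_inl_inr_true_mem.1 hj).symm.trans (mk_inl_inr_true_mem.1 hk))
  | inr_inr b c => exact absurd hj mk_inr_inr_notMem

lemma existsUnique_mk_mem [NeZero n] (hC : IsPairing (2 * n) (n - 1) C) (hr0 : r ≠ 0)
    (hr : ∀ e ∈ C, r ∉ e) (v : Vtx n) : ∃! w, s(v, w) ∈ bipyramidFactor C r i := by
  have hr_notMem {y} : s(r, y) ∉ C := fun h => hr _ h (Sym2.mem_mk_left r y)
  rcases v with x | _ | _
  · obtain ⟨a, rfl⟩ : ∃ a, x = a + i := ⟨x - i, (sub_add_cancel x i).symm⟩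
    by_cases ha0 : a = 0
    · subst ha0
      refine ⟨Sum.inr false, by simp, ?_⟩
      rintro (y | _ | _) <;> simp [hC.mk_zero_notMem, hr0]
    by_cases har : a = r
    · subst har
      refine ⟨Sum.inr true, by simp [add_comm], ?_⟩
      rintro (y | _ | _) <;> simp [hr_notMem, ha0]
    obtain ⟨b, hab⟩ := hC.exists_mk_mem (by omega) hr0 hr ha0 har
    refine ⟨Sum.inl (b + i), by simpa using hab, ?_⟩
    rintro (y | _ | _)
    · intro hy
      rw [mk_inl_inl_mem, add_sub_cancel_right] at hy
      rw [hC.right_unique hab hy, sub_add_cancel]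
    · simp [ha0]
    · simp [har, add_comm i r]
  · refine ⟨Sum.inl i, by simp [Sym2.eq_swap (a := Sum.inr _)], ?_⟩
    rintro (y | _ | _) <;> simp [Sym2.eq_swap (a := Sum.inr _) (b := Sum.inl _)]
  · refine ⟨Sum.inl (i + r), by simp [Sym2.eq_swap (a := Sum.inr _)], ?_⟩
    rintro (y | _ | _) <;> simp [Sym2.eq_swap (a := Sum.inr _) (b := Sum.inl _)]

lemma isOneFactor [NeZero n] (hC : IsCCode n C) (hr0 : r ≠ 0) (hr : ∀ e ∈ C, r ∉ e)
    (i : ZMod (2 * n)) : IsOneFactor n (bipyramidFactor C r i) :=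
  ⟨subset_edgeSet hC, fun v => existsUnique_mem_and_mem_iff.2 (existsUnique_mk_mem hC.1 hr0 hr v)⟩

lemma isBipyramidalOF [NeZero n] (hC : IsCCode n C) (hr0 : r ≠ 0) (hr : ∀ e ∈ C, r ∉ e) :
    IsBipyramidalOF n (bipyramidFactor C r) :=
  ⟨isOneFactor hC hr0 hr, fun _ _ hij => (disjoint hC.2 hij).inter_eq, iUnion_eq_edgeSet hC,
    fun i => by rw [image_vshift, zero_add]⟩

lemma connected_union [NeZero n] (hC : IsCCode n C) (hjk : j ≠ k) :
    (fromEdgeSet (bipyramidFactor C r j ∪ bipyramidFactor C r k)).Connected := by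
  set B := fromEdgeSet (bipyramidFactor C r j ∪ bipyramidFactor C r k)
  have hadj {u v : Vtx n} (huv : u ≠ v)
      (h : s(u, v) ∈ bipyramidFactor C r j ∪ bipyramidFactor C r k) : B.Reachable u v :=
    Adj.reachable ((fromEdgeSet_adj _).2 ⟨h, huv⟩)
  have hj : B.Reachable (Sum.inl j) (Sum.inr false) := hadj Sum.inl_ne_inr (by simp)
  have hk : B.Reachable (Sum.inl k) (Sum.inr false) := hadj Sum.inl_ne_inr (by simp)
  have hjr : B.Reachable (Sum.inl (j + r)) (Sum.inr true) := hadj Sum.inl_ne_inr (by simp)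
  have hinl (x : ZMod (2 * n)) : B.Reachable (Sum.inl j) (Sum.inl x) := by
    refine reachable_apply_of_forall_adj (fun x y hxy => ?_)
      ((hC.connected_sup_edge hjk).preconnected j x)
    rcases hxy with hxy | hxy
    · obtain ⟨hmem, hne⟩ := (fromEdgeSet_adj _).1 hxy
      exact hadj (Sum.inl_injective.ne hne) (by simpa [mk_mem_shiftSet] using hmem)
    · obtain ⟨⟨rfl, rfl⟩ | ⟨rfl, rfl⟩, -⟩ := (edge_adj ..).1 hxy
      exacts [hj.trans hk.symm, hk.trans hj.symm]
  refine (connected_iff_exists_forall_reachable B).2 ⟨Sum.inl j, ?_⟩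
  rintro (x | _ | _)
  exacts [hinl x, hj, (hinl (j + r)).trans hjr]

lemma isHamCycleOn_union [NeZero n] (hC : IsCCode n C) (hr0 : r ≠ 0) (hr : ∀ e ∈ C, r ∉ e)
    (hjk : j ≠ k) : IsHamCycleOn (bipyramidFactor C r j ∪ bipyramidFactor C r k) := by
  have hdiag : ∀ e ∈ bipyramidFactor C r j ∪ bipyramidFactor C r k, ¬ e.IsDiag := fun e he =>
    (Ggraph n).not_isDiag_of_mem_edgeSet
      (Set.union_subset (subset_edgeSet hC) (subset_edgeSet hC) he)
  exact ⟨connected_union hC hjk, fun v => ncard_neighborSet_fromEdgeSet_union (disjoint hC.2 hjk)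
    hdiag ((isOneFactor hC hr0 hr j).2 v) ((isOneFactor hC hr0 hr k).2 v)⟩

end bipyramidFactor

/-- If `C0` defines a C-code of length `2n` and `r` is the nonzero
element occurring in no pair of `C0`, then no pair of `C0` has difference `n`, and the
sets `F i = (i + C0) ∪ {{i,∞₁},{i+r,∞₂}}` form a bipyramidal P1F of `G_{2n+2}`. -/
theorem stmt1 (n : ℕ) (hn : 2 ≤ n)
    (C0 : Set (Sym2 (ZMod (2*n)))) (hC : IsCCode n C0)
    (r : ZMod (2*n)) (hr0 : r ≠ 0) (hr1 : ∀ e ∈ C0, r ∉ e)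
    (F : ZMod (2*n) → Set (Sym2 (Vtx n)))
    (hF : ∀ i, F i =
      (Sym2.map (Sum.inl : ZMod (2*n) → Vtx n)) '' (shiftSet i C0) ∪
        {s((Sum.inl i : Vtx n), Sum.inr false),
         s((Sum.inl (i + r) : Vtx n), Sum.inr true)}) :
    (∀ x y : ZMod (2*n), s(x, y) ∈ C0 → y - x ≠ (n : ZMod (2*n))) ∧
    IsBipyramidalP1F n F := by
  have : NeZero n := ⟨by omega⟩
  obtain rfl : F = bipyramidFactor C0 r := funext hF
  exact ⟨fun _ _ => hC.sub_ne_natCast, bipyramidFactor.isBipyramidalOF hC hr0 hr1,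
    fun _ _ => bipyramidFactor.isHamCycleOn_union hC hr0 hr1⟩
end

section
/- Let n ≥ 2 and let C₀ be a set of n−1 pairwise disjoint unordered pairs of nonzero elements of Z_{2n} that defines a C-code of length 2n. Then C₀ is an even starter in Z_{2n}: for every i ∈ Z_{2n} with i ≠ 0 and i ≠ n there is a pair {x,y} ∈ C₀ with i = x−y or i = y−x. -/
/-!
Two ordered pairs with the same difference are translates of one another, so disjointness of the
translates of `S` makes `(x, y) ↦ x - y` injective on the ordered pairs from `S`. Hence no
difference equals its own negative: `(x, y)` and `(y, x)` would have the same difference. In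
`ZMod (2 * n)` this leaves `2 * n - 2` possible values, as many as there are ordered pairs, so each
of them occurs.
-/

lemma nat_card_dart_fromEdgeSet {V : Type*} [Finite V] {E : Set (Sym2 V)}
    (hE : ∀ e ∈ E, ¬ e.IsDiag) :
    Nat.card (SimpleGraph.fromEdgeSet E).Dart = 2 * E.ncard := by
  classical
  have := Fintype.ofFinite V
  have hedge : (SimpleGraph.fromEdgeSet E).edgeSet = E := by
    rw [SimpleGraph.edgeSet_fromEdgeSet]
    exact sdiff_eq_left.mpr (Set.disjoint_left.mpr hE)
  rw [Nat.card_eq_fintype_card, SimpleGraph.dart_card_eq_twice_card_edges,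
    ← Set.ncard_coe_finset, SimpleGraph.coe_edgeFinset, hedge]

section DisjointTranslates

open Function

variable {G : Type*} [AddGroup G] {S : Set (Sym2 G)}

/-- The right translates `S + g` of a set `S` of unordered pairs are pairwise disjoint. For
`G = ZMod m` the translate by `g` is `shiftSet g S`. -/
def HasDisjointTranslates (S : Set (Sym2 G)) : Prop :=
  Pairwise (Disjoint on fun g : G => Sym2.map (· + g) '' S)

namespace HasDisjointTranslates

lemma eq_and_eq_of_sub_eq_sub (hS : HasDisjointTranslates S) {x y x' y' : G}
    (hxy : s(x, y) ∈ S) (hxy' : s(x', y') ∈ S) (hsub : x - y = x' - y') :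
    x = x' ∧ y = y' := by
  have hy : y + (-x + x') = y' := by
    rw [← add_assoc, ← sub_eq_add_neg, ← neg_sub x y, hsub, neg_sub, sub_add_cancel]
  have hshift : -x + x' = 0 := by
    by_contra hne
    have hmem : s(x', y') ∈ Sym2.map (· + (-x + x')) '' S :=
      ⟨s(x, y), hxy, by rw [Sym2.map_mk, add_neg_cancel_left, hy]⟩
    have hmem_zero : s(x', y') ∈ Sym2.map (· + (0 : G)) '' S :=
      ⟨s(x', y'), hxy', by rw [Sym2.map_mk, add_zero, add_zero]⟩
    exact Set.disjoint_left.mp (hS hne) hmem hmem_zero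
  exact ⟨neg_add_eq_zero.mp hshift, by rwa [hshift, add_zero] at hy⟩

lemma injective_dart_sub (hS : HasDisjointTranslates S) :
    Injective fun d : (SimpleGraph.fromEdgeSet S).Dart => d.fst - d.snd := by
  intro d e hde
  obtain ⟨hfst, hsnd⟩ := hS.eq_and_eq_of_sub_eq_sub d.adj.1 e.adj.1 hde
  exact SimpleGraph.Dart.ext d e (Prod.ext hfst hsnd)

lemma two_nsmul_dart_sub_ne_zero (hS : HasDisjointTranslates S)
    (d : (SimpleGraph.fromEdgeSet S).Dart) : 2 • (d.fst - d.snd) ≠ 0 := by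
  intro h
  have hneg : d.snd - d.fst = d.fst - d.snd := by
    rw [← neg_sub, neg_eq_iff_add_eq_zero, ← two_nsmul, h]
  exact d.symm_ne (hS.injective_dart_sub hneg)

theorem exists_sub_eq [Finite G] (hS : HasDisjointTranslates S)
    (hdiag : ∀ e ∈ S, ¬ e.IsDiag)
    (hcard : Nat.card G ≤ 2 * S.ncard + {g : G | 2 • g = 0}.ncard) {g : G} (hg : 2 • g ≠ 0) :
    ∃ x y : G, s(x, y) ∈ S ∧ x - y = g := by
  let diff : (SimpleGraph.fromEdgeSet S).Dart → G := fun d => d.fst - d.snd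
  have hsub : Set.range diff ⊆ {g : G | 2 • g = 0}ᶜ :=
    Set.range_subset_iff.mpr hS.two_nsmul_dart_sub_ne_zero
  have hrange : (Set.range diff).ncard = 2 * S.ncard := by
    rw [← nat_card_dart_fromEdgeSet hdiag, ← Nat.card_coe_set_eq,
      Nat.card_range_of_injective hS.injective_dart_sub]
  have heq : Set.range diff = {g : G | 2 • g = 0}ᶜ := by
    refine Set.eq_of_subset_of_ncard_le hsub ?_
    rw [Set.ncard_compl, hrange]
    exact Nat.sub_le_of_le_add hcard
  obtain ⟨d, rfl⟩ : g ∈ Set.range diff := heq ▸ hg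
  exact ⟨d.fst, d.snd, d.adj.1, rfl⟩

end HasDisjointTranslates

end DisjointTranslates

lemma zmod_two_nsmul_eq_zero_iff {n : ℕ} (hn : 0 < n) (i : ZMod (2 * n)) :
    2 • i = 0 ↔ i = 0 ∨ i = (n : ZMod (2 * n)) := by
  have : NeZero (2 * n) := ⟨by lia⟩
  have hval : 2 * i.val = 2 * n ↔ i = (n : ZMod (2 * n)) := by
    rw [Nat.mul_right_inj two_ne_zero, ← (ZMod.val_injective (2 * n)).eq_iff,
      ZMod.val_cast_of_lt (by lia : n < 2 * n)]
  rw [two_nsmul, ← neg_eq_iff_add_eq_zero, ZMod.neg_eq_self_iff, hval]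

lemma ncard_zmod_two_nsmul_eq_zero {n : ℕ} (hn : 0 < n) :
    {i : ZMod (2 * n) | 2 • i = 0}.ncard = 2 := by
  have hn0 : (n : ZMod (2 * n)) ≠ 0 := by
    rw [Ne, ZMod.natCast_eq_zero_iff]
    exact Nat.not_dvd_of_pos_of_lt hn (by lia)
  have hset : {i : ZMod (2 * n) | 2 • i = 0} = {0, (n : ZMod (2 * n))} :=
    Set.ext (zmod_two_nsmul_eq_zero_iff hn)
  rw [hset, Set.ncard_pair hn0.symm]

lemma CCodeCond.hasDisjointTranslates {m : ℕ} {C : Set (Sym2 (ZMod m))} (hC : CCodeCond m C) :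
    HasDisjointTranslates C :=
  fun a b hab => Set.disjoint_iff_inter_eq_empty.mpr (hC a b hab).1

theorem stmt3_general {n : ℕ} (hn : 0 < n) {S : Set (Sym2 (ZMod (2 * n)))}
    (hS : IsPairing (2 * n) (n - 1) S) (hdisj : HasDisjointTranslates S) :
    IsEvenStarter n S := by
  refine ⟨hS, fun i hi0 hin => ?_⟩
  have : NeZero (2 * n) := ⟨by lia⟩
  obtain ⟨hncard, hdiag, -, -⟩ := hS
  have hcard : Nat.card (ZMod (2 * n)) ≤
      2 * S.ncard + {i : ZMod (2 * n) | 2 • i = 0}.ncard := by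
    rw [Nat.card_zmod, hncard, ncard_zmod_two_nsmul_eq_zero hn]
    lia
  have hi : 2 • i ≠ 0 := by
    rw [Ne, zmod_two_nsmul_eq_zero_iff hn]
    exact not_or.mpr ⟨hi0, hin⟩
  obtain ⟨x, y, hxy, rfl⟩ := hdisj.exists_sub_eq hdiag hcard hi
  exact ⟨x, y, hxy, Or.inl rfl⟩

/-- Any set `C0` defining a C-code of length `2n` is an even starter
in `ZMod (2n)`. -/
theorem stmt3 (n : ℕ) (hn : 2 ≤ n)
    (C0 : Set (Sym2 (ZMod (2*n)))) (hC : IsCCode n C0) :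
    IsEvenStarter n C0 :=
  stmt3_general (by lia) hC.1 hC.2.hasDisjointTranslates
end

section
/- Let n ≥ 2 and let S be an even starter in Z_{2n} with missing element r. If S defines a C-code of length 2n, then its twin S^τ = {{x−r, y−r} : {x,y} ∈ S} also defines a C-code of length 2n. -/
/-! In the graph with edge set `C_a ∪ C_b`, the column `C_a` pairs off all vertices but `a` and
`r + a`, and `C_b` all vertices but `b` and `r + b`. So the order of a connected component is even
iff it contains both or neither of `a`, `r + a`, and also iff it contains both or neither of `b`,
`r + b`. Hence `a` and `b` are connected iff `r + a` and `r + b` are. Since the columns of the twin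
are the columns of `S` with `C_a` relabelled by `r + a`, this is all that has to be proved. -/

section Parity

open SimpleGraph

variable {V : Type*} {G : SimpleGraph V}

theorem even_ncard_verts_inter_supp [Finite V] {M : G.Subgraph} (hM : M.IsMatching)
    (c : G.ConnectedComponent) : Even (M.verts ∩ c.supp).ncard := by
  have := Fintype.ofFinite (M.induce (M.verts ∩ c.supp)).verts
  rw [← M.induce_verts (M.verts ∩ c.supp), Set.ncard_eq_toFinset_card']
  exact (hM.induce_connectedComponent c).even_card

theorem even_ncard_inter_pair_iff {a b : V} (hab : a ≠ b) (s : Set V) :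
    Even (s ∩ {a, b}).ncard ↔ (a ∈ s ↔ b ∈ s) := by
  by_cases ha : a ∈ s <;> by_cases hb : b ∈ s <;>
    simp [Set.inter_insert_of_mem, Set.inter_insert_of_notMem, ha, hb, hab]

theorem even_ncard_supp_iff [Finite V] {M : G.Subgraph} (hM : M.IsMatching) {a b : V}
    (hab : a ≠ b) (hverts : M.verts = {a, b}ᶜ) (c : G.ConnectedComponent) :
    Even c.supp.ncard ↔ (a ∈ c.supp ↔ b ∈ c.supp) := by
  have hsdiff : Even (c.supp \ {a, b}).ncard := by
    rw [Set.sdiff_eq, Set.inter_comm, ← hverts]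
    exact even_ncard_verts_inter_supp hM c
  rw [← Set.ncard_inter_add_ncard_sdiff_eq_ncard c.supp {a, b}, Nat.even_add,
    iff_true_right hsdiff, even_ncard_inter_pair_iff hab]

theorem reachable_iff_forall_mem_supp_iff {u v : V} :
    G.Reachable u v ↔ ∀ c : G.ConnectedComponent, u ∈ c.supp ↔ v ∈ c.supp := by
  simp only [ConnectedComponent.mem_supp_iff, ← ConnectedComponent.eq]
  exact ⟨fun h c ↦ by rw [h], fun h ↦ (h _).2 rfl⟩

theorem reachable_iff_reachable_of_verts_eq_compl_pair [Finite V] {M N : G.Subgraph}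
    (hM : M.IsMatching) (hN : N.IsMatching) {a a' b b' : V} (ha : a ≠ a') (hb : b ≠ b')
    (hMverts : M.verts = {a, a'}ᶜ) (hNverts : N.verts = {b, b'}ᶜ) :
    G.Reachable a b ↔ G.Reachable a' b' := by
  simp only [reachable_iff_forall_mem_supp_iff]
  refine forall_congr' fun c ↦ ?_
  have hparity : (a ∈ c.supp ↔ a' ∈ c.supp) ↔ (b ∈ c.supp ↔ b' ∈ c.supp) :=
    (even_ncard_supp_iff hM ha hMverts c).symm.trans (even_ncard_supp_iff hN hb hNverts c)
  tauto

end Parity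

section EdgeSet

variable {V : Type*} {G : SimpleGraph V} {C : Set (Sym2 V)}

/-- The subgraph of `G` with edge set `C` and no isolated vertices, so that a set of disjoint
edges becomes a matching in the sense of `SimpleGraph.Subgraph.IsMatching`. -/
def edgeSubgraph (C : Set (Sym2 V)) (hC : C ⊆ G.edgeSet) : G.Subgraph where
  verts := ⋃ e ∈ C, (e : Set V)
  Adj u v := s(u, v) ∈ C
  adj_sub h := hC h
  edge_vert h := Set.mem_biUnion h (Sym2.mem_mk_left _ _)
  symm := ⟨fun u v h ↦ by rwa [Sym2.eq_swap]⟩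

theorem isMatching_edgeSubgraph (hC : C ⊆ G.edgeSet)
    (hdisj : C.PairwiseDisjoint ((↑) : Sym2 V → Set V)) : (edgeSubgraph C hC).IsMatching := by
  intro v hv
  obtain ⟨e, he, w, rfl⟩ : ∃ e ∈ C, v ∈ e := by simpa [edgeSubgraph] using hv
  refine ⟨w, he, fun w' hw' ↦ ?_⟩
  have heq : s(v, w') = s(v, w) :=
    hdisj.elim_set hw' he v (Sym2.mem_mk_left v w') (Sym2.mem_mk_left v w)
  exact Sym2.congr_right.1 heq

theorem ncard_sym2_of_not_isDiag {e : Sym2 V} (he : ¬ e.IsDiag) : (e : Set V).ncard = 2 := by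
  induction e with
  | _ x y => rw [Sym2.coe_mk, Set.ncard_pair (by simpa using he)]

theorem ncard_biUnion_sym2 (hfin : C.Finite) (hdiag : ∀ e ∈ C, ¬ e.IsDiag)
    (hdisj : C.PairwiseDisjoint ((↑) : Sym2 V → Set V)) :
    (⋃ e ∈ C, (e : Set V)).ncard = 2 * C.ncard := by
  have hcard (e) (he : e ∈ C) : (e : Set V).ncard = 2 := ncard_sym2_of_not_isDiag (hdiag e he)
  rw [hfin.ncard_biUnion (fun e he ↦ Set.finite_of_ncard_pos (by simp [hcard e he])) hdisj,
    finsum_mem_congr rfl hcard, finsum_mem_eq_finite_toFinset_sum _ hfin, Finset.sum_const,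
    ← Set.ncard_eq_toFinset_card C hfin, smul_eq_mul, mul_comm]

theorem eq_compl_pair_iff_ncard [Finite V] {a b : V} (hab : a ≠ b) {s : Set V} :
    s = {a, b}ᶜ ↔ s.ncard + 2 = Nat.card V ∧ a ∉ s ∧ b ∉ s := by
  have hcompl := Set.ncard_add_ncard_compl {a, b}
  rw [Set.ncard_pair hab] at hcompl
  constructor
  · rintro rfl
    exact ⟨by omega, by simp⟩
  · rintro ⟨hcard, ha, hb⟩
    refine Set.eq_of_subset_of_ncard_le (fun x hx ↦ ?_) (by omega)
    rintro (rfl | rfl) <;> contradiction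

end EdgeSet

/-- `C` is the edge set of a matching on `V` that covers every vertex except the two distinct
vertices `a` and `b`. -/
structure IsMatchingOmitting {V : Type*} (C : Set (Sym2 V)) (a b : V) : Prop where
  not_isDiag : ∀ e ∈ C, ¬ e.IsDiag
  pairwiseDisjoint : C.PairwiseDisjoint ((↑) : Sym2 V → Set V)
  biUnion_eq : ⋃ e ∈ C, (e : Set V) = {a, b}ᶜ
  ne : a ≠ b

theorem isMatchingOmitting_iff_ncard {V : Type*} [Finite V] {C : Set (Sym2 V)} {a b : V} :
    IsMatchingOmitting C a b ↔ (∀ e ∈ C, ¬ e.IsDiag) ∧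
      C.PairwiseDisjoint ((↑) : Sym2 V → Set V) ∧ a ≠ b ∧
      2 * C.ncard + 2 = Nat.card V ∧ (∀ e ∈ C, a ∉ e) ∧ ∀ e ∈ C, b ∉ e := by
  have hcover (hdiag : ∀ e ∈ C, ¬ e.IsDiag)
      (hdisj : C.PairwiseDisjoint ((↑) : Sym2 V → Set V)) (hne : a ≠ b) :
      ⋃ e ∈ C, (e : Set V) = {a, b}ᶜ ↔
        2 * C.ncard + 2 = Nat.card V ∧ (∀ e ∈ C, a ∉ e) ∧ ∀ e ∈ C, b ∉ e := by
    simp [eq_compl_pair_iff_ncard hne, ncard_biUnion_sym2 C.toFinite hdiag hdisj]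
  constructor
  · rintro ⟨hdiag, hdisj, hunion, hne⟩
    exact ⟨hdiag, hdisj, hne, (hcover hdiag hdisj hne).1 hunion⟩
  · rintro ⟨hdiag, hdisj, hne, hcard⟩
    exact ⟨hdiag, hdisj, (hcover hdiag hdisj hne).2 hcard, hne⟩

namespace IsMatchingOmitting

variable {V W : Type*} {C D : Set (Sym2 V)} {a a' b b' : V}

theorem symm (h : IsMatchingOmitting C a b) : IsMatchingOmitting C b a where
  not_isDiag := h.not_isDiag
  pairwiseDisjoint := h.pairwiseDisjoint
  biUnion_eq := by rw [h.biUnion_eq, Set.pair_comm]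
  ne := h.ne.symm

theorem image_sym2Map (h : IsMatchingOmitting C a b) (f : V ≃ W) :
    IsMatchingOmitting (Sym2.map f '' C) (f a) (f b) where
  not_isDiag := by
    rintro _ ⟨e, he, rfl⟩ hdiag
    exact h.not_isDiag e he ((Sym2.isDiag_map f.injective).1 hdiag)
  pairwiseDisjoint := by
    rw [(Sym2.map.injective f.injective).injOn.pairwiseDisjoint_image]
    intro e he e' he' hne
    simpa only [Function.onFun, Function.comp_apply, Sym2.coe_map,
      Set.disjoint_image_iff f.injective] using h.pairwiseDisjoint he he' hne
  biUnion_eq := by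
    rw [Set.biUnion_image, ← Set.image_pair, ← Set.image_compl_eq f.bijective, ← h.biUnion_eq]
    simp only [Sym2.coe_map, Set.image_iUnion]
  ne := f.injective.ne h.ne

theorem reachable_iff_reachable [Finite V] (hC : IsMatchingOmitting C a a')
    (hD : IsMatchingOmitting D b b') :
    (SimpleGraph.fromEdgeSet (C ∪ D)).Reachable a b ↔
      (SimpleGraph.fromEdgeSet (C ∪ D)).Reachable a' b' := by
  have hCG : C ⊆ (SimpleGraph.fromEdgeSet (C ∪ D)).edgeSet := fun e he ↦ by
    simp [he, hC.not_isDiag e he]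
  have hDG : D ⊆ (SimpleGraph.fromEdgeSet (C ∪ D)).edgeSet := fun e he ↦ by
    simp [he, hD.not_isDiag e he]
  exact reachable_iff_reachable_of_verts_eq_compl_pair
    (isMatching_edgeSubgraph hCG hC.pairwiseDisjoint)
    (isMatching_edgeSubgraph hDG hD.pairwiseDisjoint) hC.ne hD.ne hC.biUnion_eq hD.biUnion_eq

end IsMatchingOmitting

section GroupCode

variable {G : Type*} [AddGroup G] {C : Set (Sym2 G)} {r : G}

/-- The column `C_a = {{x + a, y + a} : {x, y} ∈ C}` of the code generated by `C`; this is
`shiftSet a C` for an arbitrary group. -/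
def column (C : Set (Sym2 G)) (a : G) : Set (Sym2 G) := Sym2.map (· + a) '' C

/-- The graph with edge set `C_a ∪ C_b`, in which a C-code must separate `a` from `b`. -/
def columnGraph (C : Set (Sym2 G)) (a b : G) : SimpleGraph G :=
  SimpleGraph.fromEdgeSet (column C a ∪ column C b)

/-- `C` defines a C-code in the group `G`, and `r` is the nonzero element that occurs in no pair
of `C`. Where `IsPairing` prescribes the number of pairs, this notion prescribes the elements that
they cover. -/
structure IsGroupCCode (C : Set (Sym2 G)) (r : G) : Prop where
  isMatchingOmitting : IsMatchingOmitting C 0 r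
  disjoint_column : ∀ a b, a ≠ b → Disjoint (column C a) (column C b)
  isAcyclic : ∀ a b, a ≠ b → (columnGraph C a b).IsAcyclic
  not_reachable : ∀ a b, a ≠ b → ¬ (columnGraph C a b).Reachable a b

theorem column_column (C : Set (Sym2 G)) (a b : G) : column (column C a) b = column C (a + b) := by
  simp only [column, Set.image_image, Sym2.map_map, Function.comp_def, add_assoc]

theorem columnGraph_column (C : Set (Sym2 G)) (c a b : G) :
    columnGraph (column C c) a b = columnGraph C (c + a) (c + b) := by
  simp only [columnGraph, column_column]

theorem isMatchingOmitting_column {a b : G} (h : IsMatchingOmitting C a b) (c : G) :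
    IsMatchingOmitting (column C c) (a + c) (b + c) :=
  h.image_sym2Map (Equiv.addRight c)

theorem columnGraph_reachable_iff [Finite G] (h : IsMatchingOmitting C 0 r) (a b : G) :
    (columnGraph C a b).Reachable a b ↔ (columnGraph C a b).Reachable (r + a) (r + b) := by
  simpa only [columnGraph, zero_add] using
    (isMatchingOmitting_column h a).reachable_iff_reachable (isMatchingOmitting_column h b)

theorem stmt4_general [Finite G] {S : Set (Sym2 G)} (hS : IsGroupCCode S r) :
    IsGroupCCode (Sym2.map (· - r) '' S) (-r) := by
  have htwin : Sym2.map (· - r) '' S = column S (-r) := by simp only [column, sub_eq_add_neg]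
  have hne {a b : G} (hab : a ≠ b) : -r + a ≠ -r + b := (add_right_injective (-r)).ne hab
  rw [htwin]
  refine ⟨?_, fun a b hab ↦ ?_, fun a b hab ↦ ?_, fun a b hab ↦ ?_⟩
  · simpa only [add_neg_cancel, zero_add] using
      (isMatchingOmitting_column hS.isMatchingOmitting (-r)).symm
  · simpa only [column_column] using hS.disjoint_column _ _ (hne hab)
  · simpa only [columnGraph_column] using hS.isAcyclic _ _ (hne hab)
  · have hreach := columnGraph_reachable_iff hS.isMatchingOmitting (-r + a) (-r + b)
    rw [add_neg_cancel_left, add_neg_cancel_left] at hreach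
    rw [columnGraph_column, ← hreach]
    exact hS.not_reachable _ _ (hne hab)

end GroupCode

section Cyclic

variable {n : ℕ} [NeZero n] {C : Set (Sym2 (ZMod (2 * n)))} {r : ZMod (2 * n)}

theorem isMatchingOmitting_zero_iff_isPairing :
    IsMatchingOmitting C 0 r ↔ IsPairing (2 * n) (n - 1) C ∧ r ≠ 0 ∧ ∀ e ∈ C, r ∉ e := by
  have hcard : 2 * C.ncard + 2 = 2 * n ↔ C.ncard = n - 1 := by
    have := NeZero.pos n
    omega
  simp only [isMatchingOmitting_iff_ncard, IsPairing, Nat.card_zmod, hcard,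
    Set.PairwiseDisjoint, Set.Pairwise, Function.onFun, Set.disjoint_left, SetLike.mem_coe,
    ne_comm (a := r)]
  tauto

theorem isGroupCCode_iff_isCCode :
    IsGroupCCode C r ↔ IsCCode n C ∧ r ≠ 0 ∧ ∀ e ∈ C, r ∉ e := by
  constructor
  · rintro ⟨hC, hdisj, hacyclic, hsep⟩
    obtain ⟨hpairing, hr⟩ := isMatchingOmitting_zero_iff_isPairing.1 hC
    exact ⟨⟨hpairing, fun a b hab ↦
      ⟨(hdisj a b hab).inter_eq, hacyclic a b hab, hsep a b hab⟩⟩, hr⟩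
  · rintro ⟨⟨hpairing, hcode⟩, hr⟩
    exact ⟨isMatchingOmitting_zero_iff_isPairing.2 ⟨hpairing, hr⟩,
      fun a b hab ↦ Set.disjoint_iff_inter_eq_empty.2 (hcode a b hab).1,
      fun a b hab ↦ (hcode a b hab).2.1, fun a b hab ↦ (hcode a b hab).2.2⟩

end Cyclic

/-- If an even starter `S` in `ZMod (2n)` with missing element `r`
defines a C-code of length `2n`, so does its twin `S^τ = {{x-r,y-r} : {x,y} ∈ S}`. -/
theorem stmt4 (n : ℕ) (hn : 2 ≤ n)
    (S : Set (Sym2 (ZMod (2*n)))) (hS : IsEvenStarter n S)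
    (r : ZMod (2*n)) (hr0 : r ≠ 0) (hr1 : ∀ e ∈ S, r ∉ e)
    (hcode : IsCCode n S) :
    IsCCode n ((Sym2.map (· - r)) '' S) := by
  have : NeZero n := ⟨by omega⟩
  have hgroup : IsGroupCCode S r := isGroupCCode_iff_isCCode.2 ⟨hcode, hr0, hr1⟩
  exact (isGroupCCode_iff_isCCode.1 (stmt4_general hgroup)).1
end

section
/- Let n ≥ 2 and let F₀,…,F_{2n−1} be a bipyramidal one-factorization of G_{2n+2}. If for every integer i with 1 ≤ i ≤ n the graph on the vertex set of G_{2n+2} with edge set F₀ ∪ F_i is connected and every vertex has degree 2 (i.e., F₀ ∪ F_i is a Hamiltonian cycle), then for all j ≠ k with 0 ≤ j, k ≤ 2n−1 the graph with edge set F_j ∪ F_k is connected and every vertex has degree 2; that is, the one-factorization is a bipyramidal P1F. -/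
/-! Rotation by `-j` is an automorphism of the vertex set carrying `F j ∪ F k` to `F 0 ∪ F (k - j)`,
and rotation by `-k` carries it to `F 0 ∪ F (j - k)`. One of `k - j` and `j - k` is the class of an
integer in `[1, n]`, so every pair of factors reduces to one assumed to be a Hamiltonian cycle. -/

/-- The bijection `f` as a graph isomorphism from the graph with edge set `E` to the graph whose
edges are the images of those of `E`. It transports the Hamiltonian-cycle property. -/
def fromEdgeSetIso {V W : Type*} (f : V ≃ W) (E : Set (Sym2 V)) :
    SimpleGraph.fromEdgeSet E ≃g SimpleGraph.fromEdgeSet (Sym2.map f '' E) where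
  toEquiv := f
  map_rel_iff' {a b} := by
    rw [SimpleGraph.fromEdgeSet_adj, SimpleGraph.fromEdgeSet_adj, ← Sym2.map_mk,
      (Sym2.map.injective f.injective).mem_set_image, f.injective.ne_iff]

theorem IsHamCycleOn.image {V W : Type} {E : Set (Sym2 V)} (hE : IsHamCycleOn E)
    (f : V ≃ W) : IsHamCycleOn (Sym2.map f '' E) := by
  let φ := fromEdgeSetIso f E
  refine ⟨φ.connected_iff.mp hE.1, φ.surjective.forall.mpr fun v => ?_⟩
  rw [← Set.ncard_congr' (φ.mapNeighborSet v), hE.2 v]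

section EquivariantFamily

variable {V A : Type*} [AddGroup A] [AddAction A V] {F : A → Set (Sym2 V)}

theorem map_vadd_image_eq_add (hF : ∀ a, F a = Sym2.map (a +ᵥ ·) '' F 0) (a b : A) :
    Sym2.map (a +ᵥ ·) '' F b = F (a + b) := by
  have vadd_comp : (a +ᵥ ·) ∘ (b +ᵥ ·) = ((a + b) +ᵥ · : V → V) :=
    funext fun v => (add_vadd a b v).symm
  rw [hF b, hF (a + b), ← Set.image_comp, ← Sym2.map_comp, vadd_comp]

theorem map_vadd_image_union (hF : ∀ a, F a = Sym2.map (a +ᵥ ·) '' F 0) (j k : A) :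
    Sym2.map (j +ᵥ ·) '' (F 0 ∪ F (-j + k)) = F j ∪ F k := by
  rw [Set.image_union, map_vadd_image_eq_add hF, map_vadd_image_eq_add hF, add_zero,
    add_neg_cancel_left]

end EquivariantFamily

theorem mem_or_neg_mem_natCast_image_Icc {m n : ℕ} [NeZero m] (hmn : m / 2 ≤ n) {a : ZMod m}
    (ha : a ≠ 0) :
    a ∈ Nat.cast '' Set.Icc 1 n ∨ -a ∈ Nat.cast '' Set.Icc 1 n := by
  have natAbs_mem : a.valMinAbs.natAbs ∈ Set.Icc 1 n := by
    refine ⟨?_, (ZMod.natAbs_valMinAbs_le a).trans hmn⟩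
    rwa [Nat.one_le_iff_ne_zero, Int.natAbs_ne_zero, Ne, ZMod.valMinAbs_eq_zero]
  have cast_natAbs : (a.valMinAbs.natAbs : ZMod m) = a ∨ (a.valMinAbs.natAbs : ZMod m) = -a := by
    rw [ZMod.natCast_natAbs_valMinAbs]
    exact ite_eq_or_eq _ _ _
  exact cast_natAbs.imp (⟨_, natAbs_mem, ·⟩) (⟨_, natAbs_mem, ·⟩)

/-- The rotation action of `ZMod (2 * n)` on the vertices of `G_{2n+2}`, in which `i` acts as `σ^i`;
it makes a bipyramidal one-factorization an equivariant family. -/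
instance Vtx.instAddAction (n : ℕ) : AddAction (ZMod (2 * n)) (Vtx n) where
  vadd := vshift n
  zero_vadd
    | .inl x => congrArg Sum.inl (add_zero x)
    | .inr _ => rfl
  add_vadd i j
    | .inl x => congrArg Sum.inl (by rw [add_comm i j, add_assoc])
    | .inr _ => rfl

theorem stmt6_general {V : Type} {A : Type*} [AddGroup A] [AddAction A V] {F : A → Set (Sym2 V)}
    (hF : ∀ a, F a = Sym2.map (a +ᵥ ·) '' F 0) {S : Set A}
    (hS : ∀ a, a ≠ 0 → a ∈ S ∨ -a ∈ S) (hHam : ∀ a ∈ S, IsHamCycleOn (F 0 ∪ F a)) :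
    ∀ j k, j ≠ k → IsHamCycleOn (F j ∪ F k) := by
  have ham_of_mem {j k : A} (h : -j + k ∈ S) : IsHamCycleOn (F j ∪ F k) := by
    rw [← map_vadd_image_union hF]
    exact (hHam _ h).image (AddAction.toPerm j)
  intro j k hjk
  have neg_add_ne_zero : -j + k ≠ 0 := by rwa [Ne, neg_add_eq_zero]
  rcases hS _ neg_add_ne_zero with h | h
  · exact ham_of_mem h
  · rw [neg_add_rev, neg_neg] at h
    exact Set.union_comm (F k) (F j) ▸ ham_of_mem h

/-- For a bipyramidal one-factorization of `G_{2n+2}`, if `F 0 ∪ F i`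
is a Hamiltonian cycle for every integer `1 ≤ i ≤ n`, then `F j ∪ F k` is a Hamiltonian
cycle for all `j ≠ k`, i.e. the one-factorization is a bipyramidal P1F. -/
theorem stmt6 (n : ℕ) (hn : 2 ≤ n)
    (F : ZMod (2*n) → Set (Sym2 (Vtx n)))
    (hF : IsBipyramidalOF n F)
    (hHam : ∀ i : ℕ, 1 ≤ i → i ≤ n → IsHamCycleOn (F 0 ∪ F (i : ZMod (2*n)))) :
    ∀ j k : ZMod (2*n), j ≠ k → IsHamCycleOn (F j ∪ F k) := by
  have : NeZero (2 * n) := ⟨by lia⟩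
  exact stmt6_general hF.2.2.2 (fun _ => mem_or_neg_mem_natCast_image_Icc (by lia))
    (Set.forall_mem_image.mpr fun i hi => hHam i hi.1 hi.2)
end

section
/- The set C₀ = {{1,2},{3,11},{4,6},{5,9},{7,10},{8,13}} of unordered pairs of elements of Z_14 = ℤ/14ℤ defines a C-code of length 14: C₀ consists of 6 pairwise disjoint pairs of nonzero elements, and setting C_i = {{x+i, y+i} : {x,y} ∈ C₀} for i ∈ Z_14, for all m ≠ k in Z_14 one has C_m ∩ C_k = ∅, the simple graph on vertex set Z_14 with edge set C_m ∪ C_k contains no cycle, and m and k lie in different connected components of that graph. -/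
/-!
Encode a matching by the involution swapping the two ends of each edge. If `f` encodes `C₀`, then
`C_a` is encoded by the conjugate `f_a` of `f` by translation by `a`, and `f_a` fixes `a`. In the
union of the matchings of `f_a` and `f_b`, the support of a cycle is stable under both involutions
and contains no fixed point of either, hence is a union of cycles of the permutation `f_b f_a`
avoiding `a` and `b`; and since `f_a` fixes `a`, the component of `a` is exactly the cycle of
`f_b f_a` through `a`. So it is enough that every point lies on the cycle through `a` or
the cycle through `b`. These two cycles are then automatically different: a single cycle through
all `2n` points would be an odd permutation, whereas `f_b f_a` is even because `f_a` and `f_b` are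
conjugate. By translation only the pairs `(0, d)` have to be checked.
-/

open Equiv.Perm
open Function (Involutive)

section InvolutionGraph

variable {α : Type*} {f g : Equiv.Perm α} {u v x y : α}

/-- The set of 2-cycles `{x, f x}` of an involution `f`, as unordered pairs. A matching is encoded
by the involution exchanging the two ends of each edge and fixing the uncovered points. -/
def movedPairs (f : Equiv.Perm α) : Set (Sym2 α) :=
  (fun x => s(x, f x)) '' {x | f x ≠ x}

theorem mk_mem_movedPairs (hf : Involutive f) :
    s(x, y) ∈ movedPairs f ↔ x ≠ y ∧ f x = y := by
  constructor
  · rintro ⟨z, hz, h⟩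
    rcases Sym2.eq_iff.mp h with ⟨rfl, rfl⟩ | ⟨rfl, rfl⟩
    · exact ⟨hz.symm, rfl⟩
    · exact ⟨hz, hf z⟩
  · rintro ⟨hne, rfl⟩
    exact ⟨x, hne.symm, rfl⟩

theorem eq_mk_apply_of_mem_movedPairs (hf : Involutive f) {e : Sym2 α} (he : e ∈ movedPairs f)
    (hx : x ∈ e) : e = s(x, f x) := by
  obtain ⟨y, rfl⟩ := hx
  rw [((mk_mem_movedPairs hf).mp he).2]

theorem map_image_movedPairs (σ f : Equiv.Perm α) :
    Sym2.map σ '' movedPairs f = movedPairs (MulAut.conj σ f) := by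
  ext e
  constructor
  · rintro ⟨_, ⟨x, hx, rfl⟩, rfl⟩
    exact ⟨σ x, by simpa using hx, by simp⟩
  · rintro ⟨x, hx, rfl⟩
    exact ⟨_, ⟨σ.symm x, fun h => hx (by simp [h]), rfl⟩, by simp⟩

theorem two_mul_ncard_movedPairs [Fintype α] [DecidableEq α] (hf : Involutive f) :
    2 * (movedPairs f).ncard = f.support.card := by
  have himage : movedPairs f = (f.support.image fun x => s(x, f x) : Finset (Sym2 α)) := by
    rw [Finset.coe_image, coe_support_eq_set_support]
    rfl
  have hfiber : ∀ e ∈ f.support.image fun x => s(x, f x),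
      {x ∈ f.support | s(x, f x) = e}.card = 2 := by
    simp only [Finset.forall_mem_image, mem_support]
    intro x hx
    rw [← Finset.card_pair (Ne.symm hx)]
    congr 1
    ext z
    grind [Function.Involutive, mem_support, Sym2.eq_iff]
  rw [himage, Set.ncard_coe_finset, Finset.card_eq_sum_card_image (fun x => s(x, f x)),
    Finset.sum_const_nat hfiber, mul_comm]

/-- The union of the two matchings encoded by the involutions `f` and `g`. -/
abbrev involutionGraph (f g : Equiv.Perm α) : SimpleGraph α :=
  SimpleGraph.fromEdgeSet (movedPairs f ∪ movedPairs g)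

theorem involutionGraph_adj (hf : Involutive f) (hg : Involutive g) :
    (involutionGraph f g).Adj x y ↔ x ≠ y ∧ (f x = y ∨ g x = y) := by
  simp only [SimpleGraph.fromEdgeSet_adj, Set.mem_union, mk_mem_movedPairs hf,
    mk_mem_movedPairs hg]
  tauto

theorem sameCycle_mul_apply (hf : Involutive f) (hg : Involutive g)
    (h : (g * f).SameCycle x y) : (g * f).SameCycle (f x) (f y) := by
  have hinv : f * (g * f) * f⁻¹ = (g * f)⁻¹ := by
    rw [mul_inv_rev, ← mul_assoc, mul_inv_cancel_right]
    exact congrArg₂ _ (hf.symm_eq_self_of_involutive f).symm (hg.symm_eq_self_of_involutive g).symm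
  simpa only [hinv, sameCycle_inv] using h.conj (g := f)

theorem sameCycle_mul_of_reachable (hf : Involutive f) (hg : Involutive g) (hu : f u = u)
    (h : (involutionGraph f g).Reachable u x) : (g * f).SameCycle u x := by
  rw [SimpleGraph.reachable_iff_reflTransGen] at h
  induction h with
  | refl => exact SameCycle.refl _ _
  | @tail y z _ hyz ih =>
    have hfy : (g * f).SameCycle u (f y) := by simpa only [hu] using sameCycle_mul_apply hf hg ih
    rcases ((involutionGraph_adj hf hg).mp hyz).2 with rfl | rfl
    · exact hfy
    · simpa only [mul_apply, hf y] using hfy.apply_right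

theorem apply_mem_support_of_isCycle (hf : Involutive f) (hg : Involutive g)
    {c : (involutionGraph f g).Walk v v} (hc : c.IsCycle) (hx : x ∈ c.support) :
    (f x ≠ x ∧ f x ∈ c.support) ∧ (g x ≠ x ∧ g x ∈ c.support) := by
  have hsub : c.toSubgraph.neighborSet x ⊆ {f x, g x} := by
    intro y hy
    obtain ⟨-, rfl | rfl⟩ := (involutionGraph_adj hf hg).mp (c.toSubgraph.adj_sub hy) <;> simp
  have heq : c.toSubgraph.neighborSet x = {f x, g x} := by
    refine Set.eq_of_subset_of_ncard_le hsub ?_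
    rw [hc.ncard_neighborSet_toSubgraph_eq_two hx]
    exact (Set.ncard_insert_le _ _).trans (by simp)
  have hnbr : ∀ y ∈ ({f x, g x} : Set α), y ≠ x ∧ y ∈ c.support := by
    intro y hy
    have hadj : c.toSubgraph.Adj x y := by rwa [← heq] at hy
    exact ⟨(c.toSubgraph.adj_sub hadj).ne',
      c.mem_verts_toSubgraph.mp (c.toSubgraph.edge_vert hadj.symm)⟩
  exact ⟨hnbr _ (by simp), hnbr _ (by simp)⟩

theorem mem_of_sameCycle_mul (hf : Involutive f) (hg : Involutive g) {s : Set α}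
    (hfs : Set.MapsTo f s s) (hgs : Set.MapsTo g s s) (h : (g * f).SameCycle x y) (hx : x ∈ s) :
    y ∈ s := by
  have hbij {k : Equiv.Perm α} (hk : Involutive k) (hks : Set.MapsTo k s s) : Set.BijOn k s s :=
    Set.InvOn.bijOn ⟨fun z _ => hk z, fun z _ => hk z⟩ hks hks
  obtain ⟨n, rfl⟩ := h
  exact (((hbij hg hgs).comp (hbij hf hfs)).perm_zpow n).mapsTo hx

theorem isAcyclic_involutionGraph (hf : Involutive f) (hg : Involutive g)
    (h : ∀ x, ∃ y, (g * f).SameCycle x y ∧ (f y = y ∨ g y = y)) :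
    (involutionGraph f g).IsAcyclic := by
  intro v c hc
  obtain ⟨y, hvy, hfix⟩ := h v
  have hy : y ∈ {z | z ∈ c.support} :=
    mem_of_sameCycle_mul hf hg (fun _ hz => (apply_mem_support_of_isCycle hf hg hc hz).1.2)
      (fun _ hz => (apply_mem_support_of_isCycle hf hg hc hz).2.2) hvy c.start_mem_support
  obtain ⟨⟨hfy, -⟩, hgy, -⟩ := apply_mem_support_of_isCycle hf hg hc hy
  exact hfix.elim hfy hgy

theorem disjoint_movedPairs (hg : Involutive g) (hu : f u = u) (hv : g v = v)
    (hcover : ∀ x, (g * f).SameCycle u x ∨ (g * f).SameCycle v x) :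
    Disjoint (movedPairs f) (movedPairs g) := by
  rw [Set.disjoint_left]
  rintro _ ⟨x, hx, rfl⟩ hxg
  have hgx : g x = f x := ((mk_mem_movedPairs hg).mp hxg).2
  have hfixed : (g * f) x = x := by rw [mul_apply, ← hgx, hg x]
  rcases hcover x with h | h
  · obtain rfl := h.eq_of_right hfixed
    exact hx hu
  · obtain rfl := h.eq_of_right hfixed
    exact hx (hgx.symm.trans hv)

end InvolutionGraph

theorem not_sameCycle_of_even_card {α : Type*} [Fintype α] [DecidableEq α] {h : Equiv.Perm α}
    {u v : α} (heven : Even (Fintype.card α)) (hsign : sign h = 1) (hne : u ≠ v)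
    (hcover : ∀ x, h.SameCycle u x ∨ h.SameCycle v x) : ¬ h.SameCycle u v := by
  intro huv
  have hu (x : α) : h.SameCycle u x := (hcover x).elim id huv.trans
  have hmoved (x : α) : h x ≠ x := fun hx => hne <|
    calc
      u = x := (hu x).eq_of_right hx
      _ = v := ((hu x).symm.trans huv).eq_of_left hx
  have hcycle : h.IsCycle := ⟨u, hmoved u, fun x _ => hu x⟩
  have hsupport : h.support = Finset.univ := by simp [Finset.eq_univ_iff_forall, hmoved]
  have hodd := hcycle.sign
  rw [hsupport, Finset.card_univ, heven.neg_one_pow, hsign] at hodd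
  exact absurd hodd (by decide)

section Shift

variable {m : ℕ} {f : Equiv.Perm (ZMod m)}

/-- The conjugate of `f` by the translation `x ↦ x + a`. If `f` encodes a matching `C`, this
encodes the matching `shiftSet a C`. -/
def shiftPerm (a : ZMod m) (f : Equiv.Perm (ZMod m)) : Equiv.Perm (ZMod m) :=
  MulAut.conj (Equiv.addRight a) f

theorem shiftPerm_apply (a x : ZMod m) : shiftPerm a f x = f (x - a) + a := by
  simp [shiftPerm, sub_eq_add_neg]

theorem shiftPerm_apply_self (a : ZMod m) (h0 : f 0 = 0) : shiftPerm a f a = a := by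
  rw [shiftPerm_apply, sub_self, h0, zero_add]

theorem shiftSet_movedPairs (a : ZMod m) :
    shiftSet a (movedPairs f) = movedPairs (shiftPerm a f) :=
  map_image_movedPairs (Equiv.addRight a) f

theorem involutive_shiftPerm (hf : Involutive f) (a : ZMod m) : Involutive (shiftPerm a f) := by
  intro x
  simp only [shiftPerm_apply, add_sub_cancel_right, hf (x - a), sub_add_cancel]

theorem shiftPerm_mul_shiftPerm (a b : ZMod m) :
    shiftPerm b f * shiftPerm a f = shiftPerm a (shiftPerm (b - a) f * f) := by
  ext x
  simp only [mul_apply, shiftPerm_apply]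
  rw [sub_sub_eq_add_sub, add_assoc _ (b - a), sub_add_cancel]

theorem sameCycle_shiftPerm (a x y : ZMod m) :
    (shiftPerm a f).SameCycle x y ↔ f.SameCycle (x - a) (y - a) := by
  rw [shiftPerm, MulAut.conj_apply, sameCycle_conj]
  simp [sub_eq_add_neg]

theorem sign_shiftPerm [NeZero m] (a : ZMod m) : sign (shiftPerm a f) = sign f := by
  rw [shiftPerm, MulAut.conj_apply, Equiv.Perm.sign_mul, Equiv.Perm.sign_mul, sign_inv,
    mul_right_comm, Int.units_mul_self, one_mul]

theorem isPairing_movedPairs [NeZero m] {k : ℕ} (hf : Involutive f) (h0 : f 0 = 0)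
    (hcard : f.support.card = 2 * k) : IsPairing m k (movedPairs f) := by
  refine ⟨?_, ?_, ?_, ?_⟩
  · have := two_mul_ncard_movedPairs hf
    lia
  · rintro _ ⟨x, hx, rfl⟩
    exact Ne.symm hx
  · intro e he h0e
    obtain rfl := eq_mk_apply_of_mem_movedPairs hf he h0e
    exact ((mk_mem_movedPairs hf).mp he).1 h0.symm
  · intro e he e' he' hne x hx hx'
    exact hne ((eq_mk_apply_of_mem_movedPairs hf he hx).trans
      (eq_mk_apply_of_mem_movedPairs hf he' hx').symm)

theorem cCodeCond_movedPairs [NeZero m] (hm : Even m) (hf : Involutive f) (h0 : f 0 = 0)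
    (hcover : ∀ d : ZMod m, d ≠ 0 → ∀ x,
      (shiftPerm d f * f).SameCycle 0 x ∨ (shiftPerm d f * f).SameCycle d x) :
    CCodeCond m (movedPairs f) := by
  intro a b hab
  have hfa := involutive_shiftPerm hf a
  have hfb := involutive_shiftPerm hf b
  have ha : shiftPerm a f a = a := shiftPerm_apply_self a h0
  have hb : shiftPerm b f b = b := shiftPerm_apply_self b h0
  have hcover_ab (x : ZMod m) : (shiftPerm b f * shiftPerm a f).SameCycle a x ∨
      (shiftPerm b f * shiftPerm a f).SameCycle b x := by
    simpa only [shiftPerm_mul_shiftPerm, sameCycle_shiftPerm, sub_self] using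
      hcover (b - a) (sub_ne_zero.mpr hab.symm) (x - a)
  have hsign : sign (shiftPerm b f * shiftPerm a f) = 1 := by
    rw [Equiv.Perm.sign_mul, sign_shiftPerm, sign_shiftPerm, Int.units_mul_self]
  simp only [shiftSet_movedPairs]
  refine ⟨(disjoint_movedPairs hfb ha hb hcover_ab).inter_eq, ?_, fun hreach => ?_⟩
  · exact isAcyclic_involutionGraph hfa hfb fun x => (hcover_ab x).elim
      (fun h => ⟨a, h.symm, .inl ha⟩) (fun h => ⟨b, h.symm, .inr hb⟩)
  · exact not_sameCycle_of_even_card ((ZMod.card m).symm ▸ hm) hsign hab hcover_ab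
      (sameCycle_mul_of_reachable hfa hfb ha hreach)

theorem isCCode_movedPairs {n : ℕ} [NeZero n] {f : Equiv.Perm (ZMod (2 * n))}
    (hf : Involutive f) (h0 : f 0 = 0) (hcard : f.support.card = 2 * (n - 1))
    (hcover : ∀ d : ZMod (2 * n), d ≠ 0 → ∀ x,
      (shiftPerm d f * f).SameCycle 0 x ∨ (shiftPerm d f * f).SameCycle d x) :
    IsCCode n (movedPairs f) :=
  ⟨isPairing_movedPairs hf h0 hcard, cCodeCond_movedPairs (even_two_mul n) hf h0 hcover⟩

end Shift

/-- The involution encoding the matching `{1,2}, {3,11}, {4,6}, {5,9}, {7,10}, {8,13}`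
of `ZMod 14`. -/
def codePerm : Equiv.Perm (ZMod (2 * 7)) :=
  .swap 1 2 * .swap 3 11 * .swap 4 6 * .swap 5 9 * .swap 7 10 * .swap 8 13

theorem involutive_codePerm : Involutive codePerm := by
  unfold Function.Involutive
  decide +kernel

theorem movedPairs_codePerm : movedPairs codePerm =
    {s(1, 2), s(3, 11), s(4, 6), s(5, 9), s(7, 10), s(8, 13)} := by
  ext ⟨x, y⟩
  rw [mk_mem_movedPairs involutive_codePerm]
  simp only [Set.mem_insert_iff, Set.mem_singleton_iff]
  revert x y
  decide +kernel

theorem sameCycle_zero_or_sameCycle_codePerm (d : ZMod (2 * 7)) (hd : d ≠ 0) (x : ZMod (2 * 7)) :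
    (shiftPerm d codePerm * codePerm).SameCycle 0 x ∨
      (shiftPerm d codePerm * codePerm).SameCycle d x := by
  have hpow : ∀ d : ZMod (2 * 7), d ≠ 0 → ∀ x, ∃ k < 14,
      ((shiftPerm d codePerm * codePerm) ^ k) 0 = x ∨
        ((shiftPerm d codePerm * codePerm) ^ k) d = x := by
    decide +kernel
  obtain ⟨k, -, rfl | rfl⟩ := hpow d hd x
  · exact .inl (SameCycle.refl _ _).pow_right
  · exact .inr (SameCycle.refl _ _).pow_right

/-- The set `C₀ = {{1,2},{3,11},{4,6},{5,9},{7,10},{8,13}}` defines a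
C-code of length 14. -/
theorem stmt8 :
    IsCCode 7 ({s((1 : ZMod (2*7)), 2), s(3, 11), s(4, 6), s(5, 9), s(7, 10),
      s(8, 13)} : Set (Sym2 (ZMod (2*7)))) := by
  rw [← movedPairs_codePerm]
  exact isCCode_movedPairs involutive_codePerm (by decide +kernel) (by decide +kernel)
    sameCycle_zero_or_sameCycle_codePerm
end

section
/- For every prime p ≥ 5, the set Ŝ_E^A = {{x,y} : x,y ∈ (ℤ/pℤ)ˣ \ {1, 2⁻¹}, x + y = 1} is an even starter in the multiplicative group (ℤ/pℤ)ˣ: it consists of (p−3)/2 pairwise disjoint unordered pairs of elements of (ℤ/pℤ)ˣ \ {1}, and for every u ∈ (ℤ/pℤ)ˣ with u ≠ 1 and u ≠ −1 there is a pair {x,y} ∈ Ŝ_E^A with u = x⁻¹y or u = xy⁻¹. -/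
/-!
On the solutions of `x + y = 1` in units, the condition `x, y ∉ {1, 2⁻¹}` only says that `x ≠ y`, so
the pairs are the two-element orbits of the involution `x ↦ 1 - x` on `F \ {0, 1}`, whose only fixed
point is `2⁻¹`. They therefore partition `Fˣ \ {1, 2⁻¹}`, which gives disjointness and the number of
pairs. The quotients are found by solving `y = u x`, `x + y = 1`: the solution `x = (1 + u)⁻¹`,
`y = (1 + u)⁻¹ u` exists for `u ≠ -1` and has `x ≠ y` for `u ≠ 1`.
-/

theorem ncard_coe_of_not_isDiag {α : Type*} {e : Sym2 α} (he : ¬ e.IsDiag) :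
    (e : Set α).ncard = 2 := by
  induction e with | _ x y
  rw [Sym2.coe_mk, Set.ncard_pair (by simpa using he)]

theorem ncard_biUnion_coe_of_not_isDiag {α : Type*} {S : Set (Sym2 α)} (hfin : S.Finite)
    (hdiag : ∀ e ∈ S, ¬ e.IsDiag) (hdisj : S.PairwiseDisjoint ((↑) : Sym2 α → Set α)) :
    (⋃ e ∈ S, (e : Set α)).ncard = 2 * S.ncard := by
  have hcoe : ∀ e ∈ S, (e : Set α).ncard = 2 := fun e he ↦ ncard_coe_of_not_isDiag (hdiag e he)
  have hcoe_fin : ∀ e ∈ S, (e : Set α).Finite := fun e he ↦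
    Set.finite_of_ncard_ne_zero (by simp [hcoe e he])
  calc (⋃ e ∈ S, (e : Set α)).ncard
    _ = ∑ᶠ e ∈ S, (e : Set α).ncard := hfin.ncard_biUnion hcoe_fin hdisj
    _ = ∑ᶠ e ∈ S, 2 * 1 := finsum_mem_congr rfl hcoe
    _ = 2 * S.ncard := by rw [← mul_finsum_mem, finsum_one]

/-- An even starter in a finite group `G` with distinguished involution `t`: disjoint pairs of
non-identity elements whose quotients exhaust `G \ {1, t}`. The number of pairs, `|G| / 2 - 1`, is
prescribed in a form free of division and truncated subtraction. -/
structure IsGroupEvenStarter {G : Type*} [Group G] (t : G) (S : Set (Sym2 G)) : Prop where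
  two_mul_ncard_add_two : 2 * S.ncard + 2 = Nat.card G
  not_isDiag : ∀ e ∈ S, ¬ e.IsDiag
  one_notMem : ∀ e ∈ S, (1 : G) ∉ e
  pairwiseDisjoint : S.PairwiseDisjoint ((↑) : Sym2 G → Set G)
  exists_mk_mem : ∀ u : G, u ≠ 1 → u ≠ t → ∃ x y : G, s(x, y) ∈ S ∧ (u = x⁻¹ * y ∨ u = x * y⁻¹)

theorem IsGroupEvenStarter.isMulEvenStarter {p : ℕ} [Fact p.Prime] {S : Set (Sym2 (ZMod p)ˣ)}
    (hS : IsGroupEvenStarter (-1) S) : IsMulEvenStarter p S := by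
  have hcard := hS.two_mul_ncard_add_two
  rw [Nat.card_eq_fintype_card, ZMod.card_units] at hcard
  exact ⟨by omega, hS.not_isDiag, hS.one_notMem,
    fun e he e' he' hne a ha ha' ↦
      Set.disjoint_left.mp (hS.pairwiseDisjoint he he' hne) ha ha',
    hS.exists_mk_mem⟩

/-- The set `Ŝ_E^A` over an arbitrary field: the unordered pairs of units other than `1` and `2⁻¹`
with sum `1`. -/
def sumOnePairs (F : Type*) [Field F] : Set (Sym2 Fˣ) :=
  {e | ∃ x y : Fˣ, e = s(x, y) ∧ x ≠ 1 ∧ y ≠ 1 ∧ (x : F) ≠ (2 : F)⁻¹ ∧ (y : F) ≠ (2 : F)⁻¹ ∧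
    (x : F) + (y : F) = 1}

section Field

variable {F : Type*} [Field F]

theorem ne_one_of_add_eq_one {x y : Fˣ} (h : (x + y : F) = 1) : x ≠ 1 := by
  rintro rfl
  simp at h

variable [NeZero (2 : F)]

theorem eq_inv_two_iff_of_add_eq_one {x y : F} (h : x + y = 1) : x = 2⁻¹ ↔ x = y := by
  rw [← mul_eq_one_iff_eq_inv₀ two_ne_zero, ← h, mul_two, add_right_inj]

theorem mk_mem_sumOnePairs {x y : Fˣ} : s(x, y) ∈ sumOnePairs F ↔ x ≠ y ∧ (x + y : F) = 1 := by
  constructor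
  · rintro ⟨x', y', heq, -, -, hx', -, hsum⟩
    have hne : x' ≠ y' := by
      rwa [Ne, eq_inv_two_iff_of_add_eq_one hsum, Units.val_inj] at hx'
    rcases Sym2.eq_iff.mp heq with ⟨rfl, rfl⟩ | ⟨rfl, rfl⟩
    · exact ⟨hne, hsum⟩
    · exact ⟨hne.symm, by rwa [add_comm]⟩
  · rintro ⟨hne, hsum⟩
    have hsum' : (y + x : F) = 1 := by rwa [add_comm]
    refine ⟨x, y, rfl, ne_one_of_add_eq_one hsum, ne_one_of_add_eq_one hsum', ?_, ?_, hsum⟩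
    · rwa [Ne, eq_inv_two_iff_of_add_eq_one hsum, Units.val_inj]
    · rwa [Ne, eq_inv_two_iff_of_add_eq_one hsum', Units.val_inj, eq_comm]

theorem not_isDiag_of_mem_sumOnePairs {e : Sym2 Fˣ} (he : e ∈ sumOnePairs F) : ¬ e.IsDiag := by
  induction e with | _ x y
  exact (mk_mem_sumOnePairs.mp he).1

theorem one_notMem_of_mem_sumOnePairs {e : Sym2 Fˣ} (he : e ∈ sumOnePairs F) :
    (1 : Fˣ) ∉ e := by
  rintro ⟨y, rfl⟩
  exact ne_one_of_add_eq_one (mk_mem_sumOnePairs.mp he).2 rfl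

theorem pairwiseDisjoint_sumOnePairs :
    (sumOnePairs F).PairwiseDisjoint ((↑) : Sym2 Fˣ → Set Fˣ) := by
  intro e he e' he' hne
  refine Set.disjoint_left.mpr fun a ha ha' ↦ hne ?_
  obtain ⟨b, rfl⟩ := ha
  obtain ⟨c, rfl⟩ := ha'
  have hsum : (a + b : F) = a + c :=
    (mk_mem_sumOnePairs.mp he).2.trans (mk_mem_sumOnePairs.mp he').2.symm
  rw [Units.ext (add_left_cancel hsum)]

theorem biUnion_coe_sumOnePairs :
    ⋃ e ∈ sumOnePairs F, (e : Set Fˣ) = {1, (Units.mk0 2 two_ne_zero)⁻¹}ᶜ := by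
  ext a
  simp only [Set.mem_iUnion, exists_prop, SetLike.mem_coe, Set.mem_compl_iff, Set.mem_insert_iff,
    Set.mem_singleton_iff, not_or]
  have eq_half_iff : a = (Units.mk0 2 two_ne_zero)⁻¹ ↔ (a : F) = 2⁻¹ := by simp [Units.ext_iff]
  rw [eq_half_iff]
  constructor
  · rintro ⟨_, he, b, rfl⟩
    obtain ⟨hne, hsum⟩ := mk_mem_sumOnePairs.mp he
    exact ⟨ne_one_of_add_eq_one hsum,
      by rwa [eq_inv_two_iff_of_add_eq_one hsum, Units.val_inj]⟩
  · rintro ⟨ha_one, ha_half⟩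
    have hsub : (1 - a : F) ≠ 0 := sub_ne_zero.mpr fun h ↦ ha_one (Units.ext h.symm)
    have hsum : (a + Units.mk0 _ hsub : F) = 1 := add_sub_cancel _ _
    rw [eq_inv_two_iff_of_add_eq_one hsum, Units.val_inj] at ha_half
    exact ⟨s(a, Units.mk0 _ hsub), mk_mem_sumOnePairs.mpr ⟨ha_half, hsum⟩, Sym2.mem_mk_left _ _⟩

theorem two_mul_ncard_sumOnePairs_add_two [Finite F] :
    2 * (sumOnePairs F).ncard + 2 = Nat.card Fˣ := by
  have one_ne_half : (1 : Fˣ) ≠ (Units.mk0 2 two_ne_zero)⁻¹ := by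
    simpa [Units.ext_iff] using
      (eq_inv_two_iff_of_add_eq_one (add_zero (1 : F))).not.mpr one_ne_zero
  rw [← ncard_biUnion_coe_of_not_isDiag (Set.toFinite _)
      (fun _ ↦ not_isDiag_of_mem_sumOnePairs) pairwiseDisjoint_sumOnePairs,
    biUnion_coe_sumOnePairs, ← Set.ncard_pair one_ne_half, add_comm, Set.ncard_add_ncard_compl]

theorem exists_mk_mem_sumOnePairs_eq_inv_mul {u : Fˣ} (hu_one : u ≠ 1) (hu_neg : u ≠ -1) :
    ∃ x y : Fˣ, s(x, y) ∈ sumOnePairs F ∧ u = x⁻¹ * y := by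
  have hadd : (1 + u : F) ≠ 0 := fun h ↦
    hu_neg (Units.ext (by simpa using (neg_eq_of_add_eq_zero_right h).symm))
  let v : Fˣ := Units.mk0 _ hadd
  refine ⟨v⁻¹, v⁻¹ * u, mk_mem_sumOnePairs.mpr ⟨?_, ?_⟩, by group⟩
  · simpa using hu_one
  · calc (↑v⁻¹ + ↑(v⁻¹ * u) : F)
      _ = ↑v⁻¹ * (1 + u) := by rw [Units.val_mul]; ring
      _ = 1 := v.inv_mul

end Field

theorem stmt9_general (F : Type*) [Field F] [Finite F] [NeZero (2 : F)] :
    IsGroupEvenStarter (-1) (sumOnePairs F) where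
  two_mul_ncard_add_two := two_mul_ncard_sumOnePairs_add_two
  not_isDiag _ := not_isDiag_of_mem_sumOnePairs
  one_notMem _ := one_notMem_of_mem_sumOnePairs
  pairwiseDisjoint := pairwiseDisjoint_sumOnePairs
  exists_mk_mem _ hu_one hu_neg :=
    let ⟨x, y, hmem, hu⟩ := exists_mk_mem_sumOnePairs_eq_inv_mul hu_one hu_neg
    ⟨x, y, hmem, Or.inl hu⟩

/-- For every prime `p ≥ 5`,
`Ŝ_E^A = {{x,y} : x,y ∈ (ZMod p)ˣ \ {1, 2⁻¹}, x + y = 1}` is an even starter in the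
multiplicative group `(ZMod p)ˣ`. -/
theorem stmt9 (p : ℕ) [Fact p.Prime] (hp : 5 ≤ p) :
    IsMulEvenStarter p
      {e : Sym2 ((ZMod p)ˣ) | ∃ x y : (ZMod p)ˣ, e = s(x, y) ∧
        x ≠ 1 ∧ y ≠ 1 ∧ (x : ZMod p) ≠ (2 : ZMod p)⁻¹ ∧ (y : ZMod p) ≠ (2 : ZMod p)⁻¹ ∧
        (x : ZMod p) + (y : ZMod p) = 1} := by
  have : NeZero (2 : ZMod p) := ⟨Ring.two_ne_zero (by rw [ZMod.ringChar_zmod_n]; omega)⟩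
  exact (stmt9_general (ZMod p)).isMulEvenStarter
end
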